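/- arXiv:2107.06674 — 5 statements merged into one kernel-verified Lean document; each statement's English description precedes it below -/
import Mathlib

section
/- Let T be an abelian group acting on a group U by automorphisms, with the action of x ∈ T on w ∈ U written w^x. Let F = {t ∈ T : there exists u ∈ U with u ≠ 1 and u^t = u}. For subsets W ⊆ U and X ⊆ T write W^X = {w^x : w ∈ W, x ∈ X}, and for a subset S of a group write S^{±k} = (S ∪ S⁻¹ ∪ {1})^k. Let X ⊆ T and W ⊆ U be finite nonempty subsets. Then at least one of the following holds: (a) 2·|(W^{X^{±2}})^{±6}|·|X·X⁻¹ ∩ F| ≥ |W|·|X|; (b) (W^X)^{±8} = ⟨W^{⟨X⟩}⟩, the subgroup of U generated by {w^x : w ∈ W, x ∈ ⟨X⟩}. -/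
open scoped Pointwise

set_option synthInstance.maxHeartbeats 400000
set_option maxHeartbeats 1000000

/-- `S^{±k} = (S ∪ S⁻¹ ∪ {1})^k`. -/
def symPow {G : Type*} [Group G] (S : Set G) (k : ℕ) : Set G :=
  (S ∪ S⁻¹ ∪ {1}) ^ k

/-- `W^X = {w^x : w ∈ W, x ∈ X}`, the set of images of `W` under elements of `X`. -/
def actSet {T U : Type*} [Group T] [Group U] [MulDistribMulAction T U]
    (W : Set U) (X : Set T) : Set U :=
  Set.image2 (fun (x : T) (w : U) => x • w) X W

/-! Call `u` a pivot if `(w, x) ↦ w u^x` is injective on `W × X` modulo `F`. The image of this map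
at a pivot has at least `|W| |X| / |X X⁻¹ ∩ F|` elements. If `u` is not a pivot, then `u^{x₂}
(u^{x₁})⁻¹ ∈ W⁻¹ W` for some `x₁, x₂ ∈ X` with `x₁ x₂⁻¹ ∉ F`. As `T` is abelian, `v ↦ v^{x₂}
(v^{x₁})⁻¹` sends the images belonging to `u`, `w u` and `u^y`, for `w ∈ W` and `y ∈ X`, into short
words, and it is injective because `x₁ x₂⁻¹ ∉ F`. When (a) fails these images are therefore too
small for pivots. Hence being a non-pivot propagates from `1` to the whole group `H = ⟨W^{⟨X⟩}⟩`,
which is finite because a collision outside `F` determines `u`.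

By the same uniqueness, some `u ∈ H` has at most `|W|² |X|² / |H|` collisions outside `F`, and
Cauchy–Schwarz then gives its image more than `|H| / 2` elements. So `(W^X)^{±4}` fills more than
half of `H`, and its square is `H`.
-/

theorem sq_ncard_le_ncard_image_mul {α β : Type*} {P : Set α} (hP : P.Finite) (f : α → β) :
    P.ncard ^ 2 ≤ (f '' P).ncard * {z ∈ P ×ˢ P | f z.1 = f z.2}.ncard := by
  classical
  lift P to Finset α using hP
  have hpairs : {z ∈ (P : Set α) ×ˢ (P : Set α) | f z.1 = f z.2} =
      ↑{z ∈ P ×ˢ P | f z.1 = f z.2} := by ext; simp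
  have hfibre (b : β) : {z ∈ {z ∈ P ×ˢ P | f z.1 = f z.2} | f z.1 = b} =
      {a ∈ P | f a = b} ×ˢ {a ∈ P | f a = b} := by grind
  rw [hpairs, ← Finset.coe_image, Set.ncard_coe_finset, Set.ncard_coe_finset,
    Set.ncard_coe_finset]
  calc P.card ^ 2 = (∑ b ∈ P.image f, {a ∈ P | f a = b}.card) ^ 2 := by
        rw [← Finset.card_eq_sum_card_image]
    _ ≤ (P.image f).card * ∑ b ∈ P.image f, {a ∈ P | f a = b}.card ^ 2 :=
        sq_sum_le_card_mul_sum_sq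
    _ = (P.image f).card * {z ∈ P ×ˢ P | f z.1 = f z.2}.card := by
        rw [Finset.card_eq_sum_card_fiberwise (f := fun z : α × α => f z.1)
          (t := P.image f) fun z hz => by grind]
        simp only [hfibre, Finset.card_product, sq]

theorem coe_subset_mul_of_ncard_lt {G : Type*} [Group G] {H : Subgroup G} {A B : Set G}
    (hA : A ⊆ H) (hB : B ⊆ H) (hH : (H : Set G).Finite)
    (hlt : (H : Set G).ncard < A.ncard + B.ncard) : (H : Set G) ⊆ A * B := by
  intro g hg
  have hgB : g • B⁻¹ ⊆ (H : Set G) := by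
    rintro _ ⟨b, hb, rfl⟩
    exact H.mul_mem hg (H.inv_mem_iff.1 (hB hb))
  have hmeet : (A ∩ g • B⁻¹).Nonempty := by
    rw [← Set.not_disjoint_iff_nonempty_inter]
    intro hdisj
    have hunion := Set.ncard_union_eq hdisj (hH.subset hA) (hH.subset hgB)
    rw [Set.ncard_smul_set, Set.ncard_inv] at hunion
    have := Set.ncard_le_ncard (Set.union_subset hA hgB) hH
    lia
  obtain ⟨_, ha, b, hb, rfl⟩ := hmeet
  exact ⟨g * b, ha, b⁻¹, hb, mul_inv_cancel_right g b⟩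

section SymPow

variable {G : Type*} [Group G] {S S' : Set G} {a b g : G} {k l : ℕ}

theorem symPow_finite (hS : S.Finite) (k : ℕ) : (symPow S k).Finite := by
  have hbase : (S ∪ S⁻¹ ∪ {1}).Finite := (hS.union hS.inv).union (Set.finite_singleton 1)
  induction k with
  | zero => simpa only [symPow, pow_zero] using Set.finite_one
  | succ k ih => simpa only [symPow, pow_succ] using ih.mul hbase

theorem symPow_mono (hS : S ⊆ S') (hkl : k ≤ l) : symPow S k ⊆ symPow S' l :=
  Set.pow_subset_pow (Set.union_subset_union_left _ (Set.union_subset_union hS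
    (Set.inv_subset_inv.2 hS))) (Or.inr rfl) hkl

theorem ncard_symPow_mono (hS' : S'.Finite) (hS : S ⊆ S') (hkl : k ≤ l) :
    (symPow S k).ncard ≤ (symPow S' l).ncard :=
  Set.ncard_le_ncard (symPow_mono hS hkl) (symPow_finite hS' l)

theorem subset_symPow (hk : 1 ≤ k) : S ⊆ symPow S k := fun a ha =>
  symPow_mono subset_rfl hk <| by
    rw [symPow, pow_one]
    exact Or.inl (Or.inl ha)

theorem inv_subset_symPow_one : S⁻¹ ⊆ symPow S 1 := fun a ha => by
  rw [symPow, pow_one]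
  exact Or.inl (Or.inr ha)

theorem symPow_mul (S : Set G) (k l : ℕ) : symPow S k * symPow S l = symPow S (k + l) :=
  (pow_add _ k l).symm

theorem inv_mul_mem_symPow_two (ha : a ∈ S) (hb : b ∈ S) : a⁻¹ * b ∈ symPow S 2 :=
  symPow_mul S 1 1 ▸
    Set.mul_mem_mul (inv_subset_symPow_one (Set.inv_mem_inv.2 ha)) (subset_symPow le_rfl hb)

theorem mul_mul_inv_mem_symPow (ha : a ∈ S) (hg : g ∈ symPow S k) (hb : b ∈ S) :
    a * g * b⁻¹ ∈ symPow S (k + 2) := by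
  rw [show k + 2 = 1 + k + 1 by ring, ← symPow_mul, ← symPow_mul]
  exact Set.mul_mem_mul (Set.mul_mem_mul (subset_symPow le_rfl ha) hg)
    (inv_subset_symPow_one (Set.inv_mem_inv.2 hb))

theorem symPow_subset_subgroup {H : Subgroup G} (hS : S ⊆ H) (k : ℕ) : symPow S k ⊆ H :=
  Subgroup.pow_subset <| Set.union_subset
    (Set.union_subset hS fun _ ha => H.inv_mem_iff.1 (hS ha)) (Set.singleton_subset_iff.2 H.one_mem)

end SymPow

section ActSet

variable {T U : Type*} [Group T] [Group U] [MulDistribMulAction T U] {W : Set U} {X Y : Set T}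

theorem smul_mem_actSet {x : T} {w : U} (hx : x ∈ X) (hw : w ∈ W) : x • w ∈ actSet W X :=
  Set.mem_image2_of_mem hx hw

theorem actSet_mono_right (hXY : X ⊆ Y) : actSet W X ⊆ actSet W Y :=
  Set.image2_subset_right hXY

theorem actSet_union_mul_self_subset (W : Set U) (X : Set T) :
    actSet W (X ∪ X * X) ⊆ actSet W (symPow X 2) :=
  actSet_mono_right <| Set.union_subset (subset_symPow one_le_two) <|
    symPow_mul X 1 1 ▸ Set.mul_subset_mul (subset_symPow le_rfl) (subset_symPow le_rfl)

theorem actSet_finite (hW : W.Finite) (hX : X.Finite) : (actSet W X).Finite :=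
  hX.image2 _ hW

theorem smul_inv_mul_mem_symPow_two {x : T} {v w : U} (hx : x ∈ X) (hv : v ∈ W) (hw : w ∈ W) :
    x • (v⁻¹ * w) ∈ symPow (actSet W X) 2 := by
  rw [smul_mul', smul_inv']
  exact inv_mul_mem_symPow_two (smul_mem_actSet hx hv) (smul_mem_actSet hx hw)

theorem ncard_le_ncard_actSet (hW : W.Finite) (hX : X.Finite) (hne : X.Nonempty) :
    W.ncard ≤ (actSet W X).ncard := by
  obtain ⟨x, hx⟩ := hne
  rw [← Set.ncard_smul_set x W]
  refine Set.ncard_le_ncard ?_ (actSet_finite hW hX)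
  rintro _ ⟨w, hw, rfl⟩
  exact smul_mem_actSet hx hw

theorem closure_actSet_closure_subset {N : Set U} (hN : N.Finite) (hone : 1 ∈ N)
    (hW : ∀ w ∈ W, ∀ u ∈ N, w * u ∈ N) (hX : ∀ x ∈ X, ∀ u ∈ N, x • u ∈ N) :
    (Subgroup.closure (actSet W (Subgroup.closure X : Set T)) : Set U) ⊆ N := by
  -- A finite set mapped into itself by an injection is preserved by it, so no inverses are needed.
  have hXstab : Subgroup.closure X ≤ MulAction.stabilizer T N :=
    (Subgroup.closure_le _).2 fun x hx =>
      (MulAction.mem_stabilizer_set' hN).2 fun {u} hu => hX x hx u hu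
  have hstab : Subgroup.closure (actSet W (Subgroup.closure X : Set T)) ≤
      MulAction.stabilizer U N := by
    refine (Subgroup.closure_le _).2 ?_
    rintro _ ⟨x, hx, w, hw, rfl⟩
    refine (MulAction.mem_stabilizer_set' hN).2 fun {u} hu => ?_
    have hmem : x • (w * x⁻¹ • u) ∈ N := by
      rw [MulAction.mem_stabilizer_set.1 (hXstab hx)]
      exact hW w hw _ ((MulAction.mem_stabilizer_set.1 (hXstab (inv_mem hx)) u).2 hu)
    simpa only [smul_mul', smul_inv_smul, smul_eq_mul] using hmem
  intro g hg
  simpa only [smul_eq_mul, mul_one] using (MulAction.mem_stabilizer_set.1 (hstab hg) 1).2 hone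

end ActSet

/-- The set `F` of elements of `T` that fix some nontrivial element of `U`. -/
def nonfreeElements (T U : Type*) [One U] [SMul T U] : Set T :=
  {t | ∃ u : U, u ≠ 1 ∧ t • u = u}

/-- The quotient `v^y (v^x)⁻¹`. Two values `w₁ v^x` and `w₂ v^y` of the pivot map agree exactly
when it equals `w₂⁻¹ w₁`. -/
def actDiv {T U : Type*} [Group U] [SMul T U] (x y : T) (v : U) : U :=
  y • v * (x • v)⁻¹

/-- The map `(w, x) ↦ w u^x`, whose injectivity modulo `F` makes `u` a pivot. -/
def pivotMap {T U : Type*} [Mul U] [SMul T U] (u : U) (p : U × T) : U :=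
  p.1 * p.2 • u

theorem pivotMap_eq_iff {T U : Type*} [Group U] [SMul T U] {u : U} {p q : U × T} :
    pivotMap u p = pivotMap u q ↔ actDiv p.2 q.2 u = q.1⁻¹ * p.1 := by
  rw [pivotMap, pivotMap, actDiv, mul_inv_eq_iff_eq_mul, mul_assoc, eq_inv_mul_iff_mul_eq, eq_comm]

theorem actDiv_mul {T U : Type*} [Monoid T] [Group U] [MulDistribMulAction T U] (x y : T)
    (a v : U) :
    actDiv x y (a * v) = y • a * actDiv x y v * (x • a)⁻¹ := by
  simp only [actDiv, smul_mul', mul_inv_rev, mul_assoc]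

theorem actDiv_smul {T U : Type*} [CommMonoid T] [Group U] [MulDistribMulAction T U]
    (x y t : T) (v : U) : actDiv x y (t • v) = t • actDiv x y v := by
  simp only [actDiv, smul_mul', smul_inv', smul_comm t]

theorem ncard_image_pivotMap_one_le {T U : Type*} [Monoid T] [Monoid U] [MulDistribMulAction T U]
    {W : Set U} {X : Set T} (hW : W.Finite) :
    (pivotMap 1 '' W ×ˢ X).ncard ≤ W.ncard := by
  refine Set.ncard_le_ncard ?_ hW
  rintro _ ⟨⟨w, x⟩, ⟨hw, -⟩, rfl⟩
  simpa only [pivotMap, smul_one, mul_one] using hw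

section Pivot

variable {T U : Type*} [Group T] [Group U] [MulDistribMulAction T U]

/-- The pairs of points of `W × X` that the pivot map of `u` identifies although their
`T`-coordinates do not differ by an element of `F`. -/
def collisions (W : Set U) (X : Set T) (u : U) : Set ((U × T) × (U × T)) :=
  {z ∈ (W ×ˢ X) ×ˢ (W ×ˢ X) |
    z.1.2 * z.2.2⁻¹ ∉ nonfreeElements T U ∧ pivotMap u z.1 = pivotMap u z.2}

/-- `u` is a pivot for `W` and `X` if `w₁ u^{x₁} = w₂ u^{x₂}` forces `x₁ x₂⁻¹ ∈ F`. -/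
def IsPivot (W : Set U) (X : Set T) (u : U) : Prop :=
  collisions W X u = ∅

variable {W : Set U} {X : Set T} {u : U} {x₁ x₂ : T}

theorem actDiv_injective (hF : x₁ * x₂⁻¹ ∉ nonfreeElements T U) :
    Function.Injective (actDiv x₁ x₂ : U → U) := by
  intro u v huv
  have hu : x₂ • u = x₂ • v * (x₁ • v)⁻¹ * x₁ • u := mul_inv_eq_iff_eq_mul.1 huv
  have hagree : x₁ • (v⁻¹ * u) = x₂ • (v⁻¹ * u) := by
    simp only [smul_mul', smul_inv', hu, mul_assoc, inv_mul_cancel_left]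
  by_contra hne
  refine hF ⟨x₂ • (v⁻¹ * u), ?_, ?_⟩
  · rw [Ne, smul_eq_iff_eq_inv_smul, smul_one, inv_mul_eq_one]
    exact Ne.symm hne
  · rw [mul_smul, inv_smul_smul, hagree]

theorem collisions_subset (W : Set U) (X : Set T) (u : U) :
    collisions W X u ⊆ (W ×ˢ X) ×ˢ (W ×ˢ X) :=
  Set.sep_subset _ _

theorem pairwise_disjoint_collisions (W : Set U) (X : Set T) :
    Pairwise fun u v => Disjoint (collisions W X u) (collisions W X v) := by
  intro u v huv
  refine Set.disjoint_left.2 fun z ⟨_, hF, hu⟩ ⟨_, _, hv⟩ => huv (actDiv_injective hF ?_)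
  exact (pivotMap_eq_iff.1 hu).trans (pivotMap_eq_iff.1 hv).symm

theorem finite_setOf_not_isPivot (hW : W.Finite) (hX : X.Finite) :
    {u | ¬IsPivot W X u}.Finite := by
  have hpairs : ((W ×ˢ X) ×ˢ (W ×ˢ X)).Finite := (hW.prod hX).prod (hW.prod hX)
  have hcover : {u | ¬IsPivot W X u} ⊆
      ⋃ z ∈ (W ×ˢ X) ×ˢ (W ×ˢ X), {u | z ∈ collisions W X u} := by
    intro u hu
    obtain ⟨z, hz⟩ := Set.nonempty_iff_ne_empty.2 hu
    exact Set.mem_biUnion (collisions_subset W X u hz) hz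
  refine (hpairs.biUnion fun z _ => Set.Subsingleton.finite fun u hu v hv => ?_).subset hcover
  by_contra huv
  exact Set.disjoint_left.1 (pairwise_disjoint_collisions W X huv) hu hv

theorem sum_ncard_collisions_le (hW : W.Finite) (hX : X.Finite) (s : Finset U) :
    ∑ u ∈ s, (collisions W X u).ncard ≤ (W.ncard * X.ncard) ^ 2 := by
  have hpairs : ((W ×ˢ X) ×ˢ (W ×ˢ X)).Finite := (hW.prod hX).prod (hW.prod hX)
  calc ∑ u ∈ s, (collisions W X u).ncard = (⋃ u ∈ s, collisions W X u).ncard := by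
        rw [← finsum_mem_coe_finset]
        exact (s.finite_toSet.ncard_biUnion (fun u _ => hpairs.subset (collisions_subset W X u))
          fun u _ v _ huv => pairwise_disjoint_collisions W X huv).symm
    _ ≤ ((W ×ˢ X) ×ˢ (W ×ˢ X)).ncard :=
        Set.ncard_le_ncard (Set.iUnion₂_subset fun u _ => collisions_subset W X u) hpairs
    _ = (W.ncard * X.ncard) ^ 2 := by rw [Set.ncard_prod, Set.ncard_prod, sq]

theorem ncard_nonfree_coincidences_le (hW : W.Finite) (hX : X.Finite) (u : U) :
    {z ∈ (W ×ˢ X) ×ˢ (W ×ˢ X) |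
        z.1.2 * z.2.2⁻¹ ∈ nonfreeElements T U ∧ pivotMap u z.1 = pivotMap u z.2}.ncard ≤
      W.ncard * X.ncard * (X * X⁻¹ ∩ nonfreeElements T U).ncard := by
  rw [← Set.ncard_prod, ← Set.ncard_prod]
  -- The second point and the quotient of the `T`-coordinates determine the first point.
  refine Set.ncard_le_ncard_of_injOn (fun z => (z.2, z.1.2 * z.2.2⁻¹)) ?_ ?_
    ((hW.prod hX).prod ((hX.mul hX.inv).inter_of_left _))
  · rintro ⟨p, q⟩ ⟨⟨hp, hq⟩, hF, -⟩
    exact ⟨hq, Set.mul_mem_mul hp.2 (Set.inv_mem_inv.2 hq.2), hF⟩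
  · rintro ⟨⟨w, x⟩, q⟩ ⟨-, -, h⟩ ⟨⟨w', x'⟩, q'⟩ ⟨-, -, h'⟩ heq
    obtain ⟨rfl, hquot⟩ := Prod.mk.inj heq
    obtain rfl : x = x' := mul_right_cancel hquot
    obtain rfl : w = w' := mul_right_cancel (h.trans h'.symm)
    rfl

theorem sq_ncard_le_ncard_image_pivotMap_mul (hW : W.Finite) (hX : X.Finite) (u : U) :
    (W.ncard * X.ncard) ^ 2 ≤ (pivotMap u '' W ×ˢ X).ncard *
      (W.ncard * X.ncard * (X * X⁻¹ ∩ nonfreeElements T U).ncard + (collisions W X u).ncard) := by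
  have hsplit : {z ∈ (W ×ˢ X) ×ˢ (W ×ˢ X) | pivotMap u z.1 = pivotMap u z.2} =
      {z ∈ (W ×ˢ X) ×ˢ (W ×ˢ X) |
        z.1.2 * z.2.2⁻¹ ∈ nonfreeElements T U ∧ pivotMap u z.1 = pivotMap u z.2} ∪
      collisions W X u := by
    ext z
    simp only [collisions, Set.mem_union, Set.mem_ofPred_eq]
    tauto
  calc (W.ncard * X.ncard) ^ 2 ≤ _ := by
        simpa only [Set.ncard_prod] using sq_ncard_le_ncard_image_mul (hW.prod hX) (pivotMap u)
    _ ≤ _ := by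
        rw [hsplit]
        gcongr
        refine (Set.ncard_union_le _ _).trans ?_
        gcongr
        exact ncard_nonfree_coincidences_le hW hX u

theorem IsPivot.ncard_mul_ncard_le (hu : IsPivot W X u) (hW : W.Finite) (hX : X.Finite) :
    W.ncard * X.ncard ≤
      (pivotMap u '' W ×ˢ X).ncard * (X * X⁻¹ ∩ nonfreeElements T U).ncard := by
  have henergy := sq_ncard_le_ncard_image_pivotMap_mul hW hX u
  rw [hu, Set.ncard_empty, add_zero] at henergy
  rcases Nat.eq_zero_or_pos (W.ncard * X.ncard) with hzero | hpos
  · exact hzero ▸ Nat.zero_le _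
  · exact Nat.le_of_mul_le_mul_left (by linarith) hpos

theorem not_isPivot_of_ncard_image_pivotMap_le (hW : W.Finite) (hX : X.Finite) {m : ℕ}
    (hu : (pivotMap u '' W ×ˢ X).ncard ≤ m)
    (hm : m * (X * X⁻¹ ∩ nonfreeElements T U).ncard < W.ncard * X.ncard) : ¬IsPivot W X u :=
  fun hpivot => hm.not_ge <| (hpivot.ncard_mul_ncard_le hW hX).trans (by gcongr)

theorem exists_ncard_lt_two_mul_ncard_image_pivotMap (hW : W.Finite) (hX : X.Finite)
    {A : Set U} (hA : A.Finite) (hne : A.Nonempty)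
    (hlt : ∀ u ∈ A, 2 * (pivotMap u '' W ×ˢ X).ncard *
      (X * X⁻¹ ∩ nonfreeElements T U).ncard < W.ncard * X.ncard) :
    ∃ u ∈ A, A.ncard < 2 * (pivotMap u '' W ×ˢ X).ncard := by
  by_contra! hlarge
  lift A to Finset U using hA
  rw [Set.ncard_coe_finset] at hlarge
  have hmany : ∀ u ∈ A, (W.ncard * X.ncard) ^ 2 < A.card * (collisions W X u).ncard := by
    intro u hu
    have henergy := sq_ncard_le_ncard_image_pivotMap_mul hW hX u
    have hsmall := hlt u hu
    have hpos : 0 < W.ncard * X.ncard := Nat.zero_lt_of_lt hsmall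
    have hscaled := Nat.mul_lt_mul_of_pos_left hsmall hpos
    have hcount := Nat.mul_le_mul_right (collisions W X u).ncard (hlarge u hu)
    nlinarith
  have hsum := Finset.sum_lt_sum_of_nonempty hne hmany
  rw [Finset.sum_const, smul_eq_mul, ← Finset.mul_sum] at hsum
  exact hsum.not_ge (Nat.mul_le_mul_left _ (sum_ncard_collisions_le hW hX A))

theorem exists_actDiv_eq_of_not_isPivot (hu : ¬IsPivot W X u) :
    ∃ x₁ ∈ X, ∃ x₂ ∈ X, x₁ * x₂⁻¹ ∉ nonfreeElements T U ∧
      ∃ w₁ ∈ W, ∃ w₂ ∈ W, actDiv x₁ x₂ u = w₂⁻¹ * w₁ := by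
  obtain ⟨⟨⟨w₁, x₁⟩, w₂, x₂⟩, ⟨⟨hw₁, hx₁⟩, hw₂, hx₂⟩, hF, heq⟩ := Set.nonempty_iff_ne_empty.2 hu
  exact ⟨x₁, hx₁, x₂, hx₂, hF, w₁, hw₁, w₂, hw₂, pivotMap_eq_iff.1 heq⟩

end Pivot

section Growth

variable {T U : Type*} [CommGroup T] [Group U] [MulDistribMulAction T U]
  {W S : Set U} {X : Set T} {u v w : U} {y x₁ x₂ : T}

theorem ncard_image_pivotMap_le {k : ℕ} (hS : S.Finite) (hWX : actSet W X ⊆ S) (hx₁ : x₁ ∈ X)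
    (hx₂ : x₂ ∈ X) (hF : x₁ * x₂⁻¹ ∉ nonfreeElements T U)
    (hv : ∀ x ∈ X, x • actDiv x₁ x₂ v ∈ symPow S k) :
    (pivotMap v '' W ×ˢ X).ncard ≤ (symPow S (k + 2)).ncard := by
  refine Set.ncard_le_ncard_of_injOn (actDiv x₁ x₂) ?_ (actDiv_injective hF).injOn
    (symPow_finite hS _)
  rintro _ ⟨⟨w, x⟩, ⟨hw, hx⟩, rfl⟩
  rw [pivotMap, actDiv_mul, actDiv_smul]
  exact mul_mul_inv_mem_symPow (hWX (smul_mem_actSet hx₂ hw)) (hv x hx)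
    (hWX (smul_mem_actSet hx₁ hw))

theorem ncard_image_pivotMap_le_of_not_isPivot (hW : W.Finite) (hX : X.Finite)
    (hu : ¬IsPivot W X u) :
    (pivotMap u '' W ×ˢ X).ncard ≤ (symPow (actSet W X) 4).ncard := by
  obtain ⟨x₁, hx₁, x₂, hx₂, hF, w₁, hw₁, w₂, hw₂, hdiv⟩ := exists_actDiv_eq_of_not_isPivot hu
  refine ncard_image_pivotMap_le (actSet_finite hW hX) subset_rfl hx₁ hx₂ hF fun x hx => ?_
  rw [hdiv]
  exact smul_inv_mul_mem_symPow_two hx hw₂ hw₁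

theorem ncard_image_pivotMap_smul_le_of_not_isPivot (hW : W.Finite) (hX : X.Finite)
    (hu : ¬IsPivot W X u) (hy : y ∈ X) :
    (pivotMap (y • u) '' W ×ˢ X).ncard ≤ (symPow (actSet W (X ∪ X * X)) 4).ncard := by
  obtain ⟨x₁, hx₁, x₂, hx₂, hF, w₁, hw₁, w₂, hw₂, hdiv⟩ := exists_actDiv_eq_of_not_isPivot hu
  refine ncard_image_pivotMap_le (actSet_finite hW (hX.union (hX.mul hX)))
    (actSet_mono_right Set.subset_union_left) hx₁ hx₂ hF fun x hx => ?_
  rw [actDiv_smul, hdiv, smul_smul]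
  exact smul_inv_mul_mem_symPow_two (Or.inr (Set.mul_mem_mul hx hy)) hw₂ hw₁

theorem ncard_image_pivotMap_mul_le_of_not_isPivot (hW : W.Finite) (hX : X.Finite)
    (hu : ¬IsPivot W X u) (hw : w ∈ W) :
    (pivotMap (w * u) '' W ×ˢ X).ncard ≤ (symPow (actSet W (X ∪ X * X)) 6).ncard := by
  obtain ⟨x₁, hx₁, x₂, hx₂, hF, w₁, hw₁, w₂, hw₂, hdiv⟩ := exists_actDiv_eq_of_not_isPivot hu
  refine ncard_image_pivotMap_le (actSet_finite hW (hX.union (hX.mul hX)))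
    (actSet_mono_right Set.subset_union_left) hx₁ hx₂ hF fun x hx => ?_
  have hmem {t : T} (ht : t ∈ X) : (x * t) • w ∈ actSet W (X ∪ X * X) :=
    smul_mem_actSet (Or.inr (Set.mul_mem_mul hx ht)) hw
  rw [actDiv_mul, hdiv, smul_mul', smul_mul', smul_inv', smul_smul, smul_smul]
  exact mul_mul_inv_mem_symPow (hmem hx₂) (smul_inv_mul_mem_symPow_two (Or.inl hx) hw₂ hw₁)
    (hmem hx₁)

theorem closure_subset_setOf_not_isPivot (hW : W.Finite) (hX : X.Finite)
    (hlt : (symPow (actSet W (X ∪ X * X)) 6).ncard * (X * X⁻¹ ∩ nonfreeElements T U).ncard <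
      W.ncard * X.ncard) :
    (Subgroup.closure (actSet W (Subgroup.closure X : Set T)) : Set U) ⊆
      {u | ¬IsPivot W X u} := by
  have hfinite : (actSet W (X ∪ X * X)).Finite := actSet_finite hW (hX.union (hX.mul hX))
  have hnot {u : U} (hu : (pivotMap u '' W ×ˢ X).ncard ≤
      (symPow (actSet W (X ∪ X * X)) 6).ncard) : ¬IsPivot W X u :=
    not_isPivot_of_ncard_image_pivotMap_le hW hX hu hlt
  have hX_nonempty : X.Nonempty :=
    Set.nonempty_of_ncard_ne_zero (Nat.pos_of_lt_mul_left hlt).ne'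
  refine closure_actSet_closure_subset (finite_setOf_not_isPivot hW hX) (hnot ?_)
    (fun w hw u hu => hnot (ncard_image_pivotMap_mul_le_of_not_isPivot hW hX hu hw))
    fun y hy u hu => hnot ((ncard_image_pivotMap_smul_le_of_not_isPivot hW hX hu hy).trans
      (ncard_symPow_mono hfinite subset_rfl (by norm_num)))
  calc (pivotMap 1 '' W ×ˢ X).ncard ≤ W.ncard := ncard_image_pivotMap_one_le hW
    _ ≤ (actSet W X).ncard := ncard_le_ncard_actSet hW hX hX_nonempty
    _ ≤ (symPow (actSet W (X ∪ X * X)) 6).ncard :=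
        Set.ncard_le_ncard ((actSet_mono_right Set.subset_union_left).trans
          (subset_symPow (by norm_num))) (symPow_finite hfinite 6)

end Growth

theorem pivoting_general {T U : Type*} [CommGroup T] [Group U] [MulDistribMulAction T U]
    {X : Set T} {W : Set U} (hX : X.Finite) (hW : W.Finite) :
    2 * (symPow (actSet W (X ∪ X * X)) 6).ncard * (X * X⁻¹ ∩ nonfreeElements T U).ncard ≥
      W.ncard * X.ncard ∨
    symPow (actSet W X) 8 = Subgroup.closure (actSet W (Subgroup.closure X : Set T)) := by
  refine or_iff_not_imp_left.2 fun hlt => ?_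
  rw [ge_iff_le, not_le] at hlt
  set H := Subgroup.closure (actSet W (Subgroup.closure X : Set T))
  have hfinite : (actSet W (X ∪ X * X)).Finite := actSet_finite hW (hX.union (hX.mul hX))
  have hH : (H : Set U) ⊆ {u | ¬IsPivot W X u} :=
    closure_subset_setOf_not_isPivot hW hX <| lt_of_le_of_lt
      (Nat.mul_le_mul_right _ (Nat.le_mul_of_pos_left _ two_pos)) hlt
  have hHfinite : (H : Set U).Finite := (finite_setOf_not_isPivot hW hX).subset hH
  have hfour {u : U} (hu : u ∈ H) :
      (pivotMap u '' W ×ˢ X).ncard ≤ (symPow (actSet W X) 4).ncard :=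
    ncard_image_pivotMap_le_of_not_isPivot hW hX (hH hu)
  have hsix : (symPow (actSet W X) 4).ncard ≤ (symPow (actSet W (X ∪ X * X)) 6).ncard :=
    ncard_symPow_mono hfinite (actSet_mono_right Set.subset_union_left) (by norm_num)
  obtain ⟨u, hu, hlarge⟩ := exists_ncard_lt_two_mul_ncard_image_pivotMap hW hX hHfinite
    ⟨1, H.one_mem⟩ fun u hu => lt_of_le_of_lt
      (Nat.mul_le_mul_right _ (Nat.mul_le_mul_left 2 ((hfour hu).trans hsix))) hlt
  have hsub (k : ℕ) : symPow (actSet W X) k ⊆ H := symPow_subset_subgroup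
    ((actSet_mono_right Subgroup.subset_closure).trans Subgroup.subset_closure) k
  refine (hsub 8).antisymm ?_
  rw [← symPow_mul _ 4 4]
  refine coe_subset_mul_of_ncard_lt (hsub 4) (hsub 4) hHfinite ?_
  have := hfour hu
  lia

/-- **The pivoting argument of Gill and Helfgott.**
Let `T` be an abelian group acting on a group `U`, `F ⊆ T` the set of elements with a
nontrivial fixed point, and `X ⊆ T`, `W ⊆ U` finite nonempty. Then either
`2·|(W^{X^{±2}})^{±6}|·|XX⁻¹ ∩ F| ≥ |W||X|`, or `(W^X)^{±8} = ⟨W^{⟨X⟩}⟩`. -/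
theorem pivoting
    (T : Type) [CommGroup T] (U : Type) [Group U] [MulDistribMulAction T U]
    (X : Set T) (W : Set U)
    (hX : X.Finite) (hW : W.Finite) (hXne : X.Nonempty) (hWne : W.Nonempty) :
    2 * (symPow (actSet W (symPow X 2)) 6).ncard *
        ((X * X⁻¹) ∩ {t : T | ∃ u : U, u ≠ 1 ∧ t • u = u}).ncard ≥
      W.ncard * X.ncard ∨
    symPow (actSet W X) 8 =
      (Subgroup.closure (actSet W ((Subgroup.closure X : Subgroup T) : Set T)) :
        Set U) := by
  refine (pivoting_general hX hW).imp_left fun h => h.le.trans ?_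
  exact Nat.mul_le_mul_right _ <| Nat.mul_le_mul_left 2 <|
    ncard_symPow_mono (actSet_finite hW (symPow_finite hX 2)) (actSet_union_mul_self_subset W X)
      le_rfl
end

section
/- Let G be a finite abelian group, written additively, and let R > 0 be a real number. Let μ : G → ℝ be a probability measure on G, i.e., μ(x) ≥ 0 for all x and ∑_{x ∈ G} μ(x) = 1. For an additive character χ of G (a map χ : G → ℂ with χ(0) = 1 and χ(x+y) = χ(x)·χ(y) for all x, y) write μ̂(χ) = ∑_{x ∈ G} μ(x)·χ(x). Assume that for every additive character χ of G, either |μ̂(χ)| ≤ 1/R or μ̂(χ) = 1. Let S = {x ∈ G : μ(x) ≠ 0} be the support of μ and let A be a nonempty subset of G. Then 2·|A + S| > min(R²·|A|, |⟨S⟩|), where ⟨S⟩ is the subgroup generated by S and A + S = {a + s : a ∈ A, s ∈ S}. In particular, if S ⊆ A ⊆ ⟨S⟩ and 2·|A + A| ≤ R²·|A|, then A + A + A + A = ⟨S⟩. -/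
open scoped Pointwise
open Finset

set_option synthInstance.maxHeartbeats 400000
set_option maxHeartbeats 1000000

/-!
Let `f = 1_A * μ`, which has mass `|A|` and lives on `A + S`, so Cauchy–Schwarz gives
`|A|² ≤ |A + S| ‖f‖₂²`. By Parseval, `|G| ‖f‖₂² = ∑_χ |Â(χ)|² |μ̂(χ)|²`. Characters with
`|μ̂| ≤ 1/R` contribute at most `|G| |A| / R²`, by Parseval again. A character with `μ̂(χ) = 1` is
trivial on `⟨S⟩`, so there are at most `|G| / |⟨S⟩|` of these, each contributing at most `|A|²`.
Hence `1 / |A + S| < 1 / (R² |A|) + 1 / |⟨S⟩|`; the inequality is strict because the two bounds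
overlap at the trivial character. So `|A + S|` exceeds half of `R² |A|` or half of `|⟨S⟩|`.

If `S ⊆ A ⊆ ⟨S⟩` and `2 |A + A| ≤ R² |A|`, the second case holds and `A + A` is more than half of
`⟨S⟩`; hence `A + A` meets `h - (A + A)` for every `h ∈ ⟨S⟩`.
-/

/-- The Fourier coefficient `f̂(χ) = ∑ x, f x * χ x` of a function on a finite group (or monoid),
with no normalisation and no conjugation of `χ`. -/
def charSum {G R : Type*} [AddMonoid G] [Fintype G] [CommSemiring R] (f : G → R)
    (χ : AddChar G R) : R := ∑ x, f x * χ x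

lemma charSum_zero {G R : Type*} [AddMonoid G] [Fintype G] [CommSemiring R] (f : G → R) :
    charSum f 0 = ∑ x, f x := by
  simp only [charSum, AddChar.zero_apply, mul_one]

section Convolution

variable {G R : Type*} [AddGroup G] [Fintype G] [CommSemiring R]

/-- The convolution of two functions on a finite group, with respect to counting measure. -/
def conv (f g : G → R) (x : G) : R := ∑ y, f (x - y) * g y

lemma charSum_conv (f g : G → R) (χ : AddChar G R) :
    charSum (conv f g) χ = charSum f χ * charSum g χ := by
  calc charSum (conv f g) χ = ∑ y, ∑ x, f (x - y) * g y * χ x := by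
        simp only [charSum, conv, sum_mul]
        exact sum_comm
    _ = ∑ y, ∑ x, f x * χ x * (g y * χ y) := by
        refine sum_congr rfl fun y _ ↦ ?_
        rw [← Equiv.sum_comp (Equiv.addRight y)]
        refine sum_congr rfl fun x _ ↦ ?_
        rw [Equiv.coe_addRight, add_sub_cancel_right, AddChar.map_add_eq_mul]
        ring
    _ = charSum f χ * charSum g χ := by
        rw [sum_comm, charSum, charSum, sum_mul_sum]

lemma sum_conv (f g : G → R) : ∑ x, conv f g x = (∑ x, f x) * ∑ x, g x := by
  simpa only [charSum_zero] using charSum_conv f g 0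

lemma support_conv_subset (f g : G → R) :
    Function.support (conv f g) ⊆ Function.support f + Function.support g := by
  intro x hx
  obtain ⟨y, -, hy⟩ := exists_ne_zero_of_sum_ne_zero hx
  exact ⟨x - y, left_ne_zero_of_mul hy, y, right_ne_zero_of_mul hy, sub_add_cancel x y⟩

end Convolution

lemma norm_charSum_le {G K : Type*} [AddLeftCancelMonoid G] [Fintype G] [NormedField K]
    (f : G → K) (χ : AddChar G K) : ‖charSum f χ‖ ≤ ∑ x, ‖f x‖ := by
  refine (norm_sum_le _ _).trans_eq (sum_congr rfl fun x _ ↦ ?_)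
  rw [norm_mul, AddChar.norm_apply, mul_one]

lemma eq_one_of_charSum_eq_one {G : Type*} [AddLeftCancelMonoid G] [Fintype G] {μ : G → ℝ}
    (hμ0 : ∀ x, 0 ≤ μ x) (hμ1 : ∑ x, μ x = 1) {χ : AddChar G ℂ}
    (hχ : charSum (fun x ↦ (μ x : ℂ)) χ = 1) {x : G} (hx : μ x ≠ 0) : χ x = 1 := by
  have re_le (y : G) : (χ y).re ≤ 1 := (Complex.re_le_norm _).trans_eq (χ.norm_apply y)
  have sum_eq_zero : ∑ y, μ y * (1 - (χ y).re) = 0 := by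
    have := congrArg Complex.re hχ
    simp only [charSum, Complex.re_sum, Complex.re_ofReal_mul, Complex.one_re] at this
    simp only [mul_sub, mul_one, sum_sub_distrib, this, hμ1, sub_self]
  have re_eq : (χ x).re = 1 := by
    have := (sum_eq_zero_iff_of_nonneg fun y _ ↦
      mul_nonneg (hμ0 y) (sub_nonneg.2 (re_le y))).1 sum_eq_zero x (mem_univ x)
    linarith [(mul_eq_zero.1 this).resolve_left hx]
  have im_eq : (χ x).im = 0 := Complex.abs_re_eq_norm.1 (by rw [re_eq, abs_one, χ.norm_apply])
  exact Complex.ext re_eq im_eq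

lemma norm_sum_sq_le_ncard_support_mul {ι E : Type*} [Fintype ι] [SeminormedAddCommGroup E]
    {f : ι → E} {T : Set ι} (hf : Function.support f ⊆ T) :
    ‖∑ x, f x‖ ^ 2 ≤ T.ncard * ∑ x, ‖f x‖ ^ 2 := by
  classical
  have sum_eq : ∑ x ∈ T.toFinset, f x = ∑ x, f x :=
    sum_subset (subset_univ _) fun x _ hx ↦ by
      by_contra h
      exact hx (Set.mem_toFinset.2 (hf h))
  rw [Set.ncard_eq_toFinset_card', ← sum_eq]
  calc ‖∑ x ∈ T.toFinset, f x‖ ^ 2 ≤ (∑ x ∈ T.toFinset, ‖f x‖) ^ 2 := by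
        gcongr; exact norm_sum_le _ _
    _ ≤ #T.toFinset * ∑ x ∈ T.toFinset, ‖f x‖ ^ 2 := sq_sum_le_card_mul_sum_sq
    _ ≤ #T.toFinset * ∑ x, ‖f x‖ ^ 2 := by
        gcongr; exact subset_univ _

lemma sum_indicator_one {ι M : Type*} [Fintype ι] [AddCommMonoidWithOne M] (A : Set ι) :
    ∑ x, A.indicator (1 : ι → M) x = A.ncard := by
  classical
  simp only [Set.indicator_apply, Pi.one_apply, sum_boole, Set.ncard_eq_toFinset_card',
    ← Set.toFinset_ofPred, Set.ofPred_mem_eq]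

lemma sum_norm_indicator_one_pow {ι E : Type*} [Fintype ι] [SeminormedRing E] [NormOneClass E]
    (A : Set ι) {n : ℕ} (hn : n ≠ 0) :
    ∑ x, ‖A.indicator (1 : ι → E) x‖ ^ n = A.ncard := by
  rw [← sum_indicator_one]
  exact sum_congr rfl fun x _ ↦ by by_cases hx : x ∈ A <;> simp [hx, hn]

lemma min_lt_two_mul_of_inv_lt_inv_add_inv {K : Type*} [Field K] [LinearOrder K]
    [IsStrictOrderedRing K] {a b c : K} (hc : 0 < c) (h : c⁻¹ < a⁻¹ + b⁻¹) :
    min a b < 2 * c := by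
  by_contra! hle
  obtain ⟨ha, hb⟩ := le_min_iff.1 hle
  refine h.not_ge ?_
  calc a⁻¹ + b⁻¹ ≤ (2 * c)⁻¹ + (2 * c)⁻¹ := by gcongr
    _ = c⁻¹ := by field_simp; norm_num

section Characters

variable {G : Type*} [AddCommGroup G]

open scoped ComplexConjugate in
theorem sum_norm_charSum_sq [Fintype G] (f : G → ℂ) :
    ∑ χ, ‖charSum f χ‖ ^ 2 = Fintype.card G * ∑ x, ‖f x‖ ^ 2 := by
  classical
  have expand (χ : AddChar G ℂ) : charSum f χ * conj (charSum f χ) =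
      ∑ x, ∑ y, f x * conj (f y) * χ (x - y) := by
    rw [charSum, map_sum, sum_mul_sum]
    refine sum_congr rfl fun x _ ↦ sum_congr rfl fun y _ ↦ ?_
    rw [map_mul, ← AddChar.map_neg_eq_conj, sub_eq_add_neg, AddChar.map_add_eq_mul]
    ring
  have key : ∑ χ, charSum f χ * conj (charSum f χ) =
      Fintype.card G * ∑ x, f x * conj (f x) := by
    calc ∑ χ, charSum f χ * conj (charSum f χ)
        = ∑ x, ∑ y, f x * conj (f y) * ∑ χ : AddChar G ℂ, χ (x - y) := by
          simp only [expand, mul_sum]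
          rw [sum_comm]
          exact sum_congr rfl fun x _ ↦ sum_comm
      _ = Fintype.card G * ∑ x, f x * conj (f x) := by
          simp only [AddChar.sum_apply_eq_ite, sub_eq_zero, mul_ite, mul_zero, sum_ite_eq,
            mem_univ, if_true, mul_comm _ (Fintype.card G : ℂ), ← mul_sum]
  simp only [Complex.mul_conj'] at key
  exact_mod_cast key

theorem ncard_annihilator_mul_card [Finite G] (H : AddSubgroup G) :
    {χ : AddChar G ℂ | ∀ x ∈ H, χ x = 1}.ncard * Nat.card H = Nat.card G := by
  have range_eq : Set.range (fun ψ : AddChar (G ⧸ H) ℂ ↦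
      ψ.compAddMonoidHom (QuotientAddGroup.mk' H)) = {χ | ∀ x ∈ H, χ x = 1} := by
    ext χ
    refine ⟨?_, fun hχ ↦ ⟨AddChar.toAddMonoidHomEquiv.symm
      (QuotientAddGroup.lift H χ.toAddMonoidHom hχ), rfl⟩⟩
    rintro ⟨ψ, rfl⟩ x hx
    simp [(QuotientAddGroup.eq_zero_iff x).2 hx]
  have card_dual : Nat.card (AddChar (G ⧸ H) ℂ) = Nat.card (G ⧸ H) := by
    have := Fintype.ofFinite (G ⧸ H)
    simp only [Nat.card_eq_fintype_card, AddChar.card_eq]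
  rw [← range_eq, Set.ncard_range_of_injective (AddChar.compAddMonoidHom_injective_left _
    (QuotientAddGroup.mk'_surjective H)), card_dual,
    ← AddSubgroup.card_eq_card_quotient_mul_card_addSubgroup]

lemma ncard_charSum_eq_one_mul_card_closure_le [Fintype G] {μ : G → ℝ} (hμ0 : ∀ x, 0 ≤ μ x)
    (hμ1 : ∑ x, μ x = 1) :
    {χ | charSum (fun x ↦ (μ x : ℂ)) χ = 1}.ncard *
      Nat.card (AddSubgroup.closure (Function.support μ)) ≤ Fintype.card G := by
  rw [← Nat.card_eq_fintype_card,
    ← ncard_annihilator_mul_card (AddSubgroup.closure (Function.support μ))]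
  refine Nat.mul_le_mul_right _ (Set.ncard_le_ncard (fun χ hχ ↦ ?_) (Set.toFinite _))
  exact AddMonoidHom.eqOn_closure (f := χ.toAddMonoidHom) (g := 0)
    fun x hx ↦ eq_one_of_charSum_eq_one hμ0 hμ1 hχ hx

theorem card_mul_sum_norm_conv_sq_lt [Fintype G] {f g : G → ℂ} {r : ℝ} (hr : 0 < r)
    (hf : ∑ x, f x ≠ 0) (hg1 : ∑ x, g x = 1) (hg : ∀ χ, ‖charSum g χ‖ ≤ r ∨ charSum g χ = 1) :
    Fintype.card G * ∑ x, ‖conv f g x‖ ^ 2 <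
      r ^ 2 * (Fintype.card G * ∑ x, ‖f x‖ ^ 2) +
        {χ | charSum g χ = 1}.ncard * (∑ x, ‖f x‖) ^ 2 := by
  classical
  have sum_large : ∑ χ, (if charSum g χ = 1 then (∑ x, ‖f x‖) ^ 2 else 0) =
      {χ | charSum g χ = 1}.ncard * (∑ x, ‖f x‖) ^ 2 := by
    rw [← sum_filter, sum_const, nsmul_eq_mul, Set.ncard_eq_toFinset_card', Set.toFinset_ofPred]
  rw [← sum_norm_charSum_sq, ← sum_norm_charSum_sq, mul_sum, ← sum_large, ← sum_add_distrib]
  simp only [charSum_conv, norm_mul, mul_pow]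
  have sq_le (χ : AddChar G ℂ) : ‖charSum f χ‖ ^ 2 ≤ (∑ x, ‖f x‖) ^ 2 := by
    gcongr; exact norm_charSum_le f χ
  refine sum_lt_sum (fun χ _ ↦ ?_) ⟨0, mem_univ _, ?_⟩
  · split_ifs with hχ
    · rw [hχ, norm_one, one_pow, mul_one]
      exact le_add_of_nonneg_of_le (by positivity) (sq_le χ)
    · rw [add_zero, mul_comm]
      gcongr
      exact (hg χ).resolve_right hχ
  · have hg0 : charSum g 0 = 1 := by rw [charSum_zero, hg1]
    have hf0 : 0 < ‖charSum f 0‖ := by rwa [norm_pos_iff, charSum_zero]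
    rw [if_pos hg0, hg0, norm_one, one_pow, mul_one]
    exact lt_add_of_pos_of_le (by positivity) (sq_le 0)

theorem card_mul_norm_sum_sq_lt [Fintype G] {f g : G → ℂ} {r : ℝ} (hr : 0 < r)
    (hf : ∑ x, f x ≠ 0) (hg1 : ∑ x, g x = 1) (hg : ∀ χ, ‖charSum g χ‖ ≤ r ∨ charSum g χ = 1) :
    Fintype.card G * ‖∑ x, f x‖ ^ 2 <
      (Function.support f + Function.support g).ncard *
        (r ^ 2 * (Fintype.card G * ∑ x, ‖f x‖ ^ 2) +
          {χ | charSum g χ = 1}.ncard * (∑ x, ‖f x‖) ^ 2) := by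
  set t := ((Function.support f + Function.support g).ncard : ℝ)
  have cauchy_schwarz : ‖∑ x, f x‖ ^ 2 ≤ t * ∑ x, ‖conv f g x‖ ^ 2 := by
    simpa only [sum_conv, hg1, mul_one] using
      norm_sum_sq_le_ncard_support_mul (support_conv_subset f g)
  have t_pos : 0 < t := by
    refine pos_of_mul_pos_left (lt_of_lt_of_le ?_ cauchy_schwarz) (by positivity)
    have := norm_pos_iff.2 hf
    positivity
  calc Fintype.card G * ‖∑ x, f x‖ ^ 2
      ≤ Fintype.card G * (t * ∑ x, ‖conv f g x‖ ^ 2) := by gcongr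
    _ = t * (Fintype.card G * ∑ x, ‖conv f g x‖ ^ 2) := by ring
    _ < _ := by
      gcongr
      exact card_mul_sum_norm_conv_sq_lt hr hf hg1 hg

theorem card_mul_ncard_sq_lt [Fintype G] {g : G → ℂ} {r : ℝ} (hr : 0 < r)
    (hg1 : ∑ x, g x = 1) (hg : ∀ χ, ‖charSum g χ‖ ≤ r ∨ charSum g χ = 1) {A : Set G}
    (hA : A.Nonempty) :
    Fintype.card G * (A.ncard : ℝ) ^ 2 <
      (A + Function.support g).ncard *
        (r ^ 2 * (Fintype.card G * A.ncard) + {χ | charSum g χ = 1}.ncard * A.ncard ^ 2) := by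
  have sum_eq : ∑ x, A.indicator (1 : G → ℂ) x = A.ncard := sum_indicator_one A
  have sum_norm_eq : ∑ x, ‖A.indicator (1 : G → ℂ) x‖ = A.ncard := by
    simpa only [pow_one] using sum_norm_indicator_one_pow (E := ℂ) A one_ne_zero
  have sum_ne_zero : ∑ x, A.indicator (1 : G → ℂ) x ≠ 0 := by
    rw [sum_eq]
    exact Nat.cast_ne_zero.2 ((Set.ncard_pos A.toFinite).2 hA).ne'
  have key := card_mul_norm_sum_sq_lt hr sum_ne_zero hg1 hg
  rwa [sum_eq, sum_norm_eq, sum_norm_indicator_one_pow A two_ne_zero, Set.support_indicator,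
    Function.support_one, Set.inter_univ, Complex.norm_natCast] at key

theorem inv_ncard_add_support_lt [Fintype G] {R : ℝ} (hR : 0 < R) {μ : G → ℝ}
    (hμ0 : ∀ x, 0 ≤ μ x) (hμ1 : ∑ x, μ x = 1)
    (hμ : ∀ χ, ‖charSum (fun x ↦ (μ x : ℂ)) χ‖ ≤ 1 / R ∨ charSum (fun x ↦ (μ x : ℂ)) χ = 1)
    {A : Set G} (hA : A.Nonempty) :
    ((A + Function.support μ).ncard : ℝ)⁻¹ <
      (R ^ 2 * A.ncard)⁻¹ + (Nat.card (AddSubgroup.closure (Function.support μ)) : ℝ)⁻¹ := by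
  have dual := ncard_charSum_eq_one_mul_card_closure_le hμ0 hμ1
  have spectral := card_mul_ncard_sq_lt (one_div_pos.2 hR) (by exact_mod_cast hμ1) hμ hA
  have support_ofReal : Function.support (fun x ↦ (μ x : ℂ)) = Function.support μ := by
    ext x; simp
  rw [support_ofReal] at spectral
  set t := ((A + Function.support μ).ncard : ℝ)
  set η := Nat.card (AddSubgroup.closure (Function.support μ))
  set k := {χ | charSum (fun x ↦ (μ x : ℂ)) χ = 1}.ncard
  set N := Fintype.card G
  set a := A.ncard
  have a_pos : 0 < a := (Set.ncard_pos A.toFinite).2 hA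
  have N_pos : 0 < N := Fintype.card_pos
  have η_pos : (0 : ℝ) < η := Nat.cast_pos.2 Nat.card_pos
  have k_le : (k : ℝ) ≤ N * (η : ℝ)⁻¹ := by
    rw [← div_eq_mul_inv, le_div_iff₀ η_pos]
    exact_mod_cast dual
  have t_pos : 0 < t :=
    pos_of_mul_pos_left ((by positivity : 0 < N * (a : ℝ) ^ 2).trans spectral) (by positivity)
  refine lt_of_mul_lt_mul_left ?_ (by positivity : 0 ≤ N * (a : ℝ) ^ 2)
  calc N * (a : ℝ) ^ 2 * t⁻¹ < (1 / R) ^ 2 * (N * a) + k * a ^ 2 := by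
        rwa [← div_eq_mul_inv, div_lt_iff₀' t_pos]
    _ ≤ (1 / R) ^ 2 * (N * a) + N * (η : ℝ)⁻¹ * a ^ 2 := by gcongr
    _ = N * a ^ 2 * ((R ^ 2 * a)⁻¹ + (η : ℝ)⁻¹) := by field_simp

theorem min_lt_two_mul_ncard_add_support [Fintype G] {R : ℝ} (hR : 0 < R) {μ : G → ℝ}
    (hμ0 : ∀ x, 0 ≤ μ x) (hμ1 : ∑ x, μ x = 1)
    (hμ : ∀ χ, ‖charSum (fun x ↦ (μ x : ℂ)) χ‖ ≤ 1 / R ∨ charSum (fun x ↦ (μ x : ℂ)) χ = 1)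
    {A : Set G} (hA : A.Nonempty) :
    min (R ^ 2 * A.ncard) ((AddSubgroup.closure (Function.support μ) : Set G).ncard : ℝ) <
      2 * (A + Function.support μ).ncard := by
  have sumset_nonempty : (A + Function.support μ).Nonempty := by
    obtain ⟨x, -, hx⟩ := exists_ne_zero_of_sum_ne_zero (hμ1.trans_ne one_ne_zero)
    exact hA.add ⟨x, hx⟩
  exact min_lt_two_mul_of_inv_lt_inv_add_inv
    (Nat.cast_pos.2 ((Set.ncard_pos (Set.toFinite _)).2 sumset_nonempty))
    (inv_ncard_add_support_lt hR hμ0 hμ1 hμ hA)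

end Characters

lemma add_eq_coe_of_ncard_lt_ncard_add_ncard {G : Type*} [AddGroup G] {H : AddSubgroup G}
    [Finite H] {B C : Set G} (hB : B ⊆ H) (hC : C ⊆ H)
    (hcard : (H : Set G).ncard < B.ncard + C.ncard) : B + C = H := by
  refine (Set.add_subset_iff.2 fun b hb c hc ↦ H.add_mem (hB hb) (hC hc)).antisymm fun h hh ↦ ?_
  have hC' : (fun c ↦ h - c) '' C ⊆ H := by
    rintro _ ⟨c, hc, rfl⟩
    exact H.sub_mem hh (hC hc)
  have meet : ¬ Disjoint B ((fun c ↦ h - c) '' C) := fun hdisj ↦ by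
    have hfin : (H : Set G).Finite := Set.toFinite _
    refine hcard.not_ge ?_
    rw [← Set.ncard_image_of_injective C (sub_right_injective (b := h)),
      ← Set.ncard_union_eq hdisj (hfin.subset hB) (hfin.subset hC')]
    exact Set.ncard_le_ncard (Set.union_subset hB hC') hfin
  obtain ⟨_, hb, c, hc, rfl⟩ := Set.not_disjoint_iff.1 meet
  exact ⟨h - c, hb, c, hc, sub_add_cancel h c⟩

/-- **A Fourier-analytic growth lemma.**
Let `μ` be a probability measure on a finite abelian group `G` such that every additive
character `χ` of `G` has `|μ̂(χ)| ≤ 1/R` or `μ̂(χ) = 1`, let `S` be the support of `μ`,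
and `A ⊆ G` nonempty. Then `2|A + S| > min(R²|A|, |⟨S⟩|)`; in particular if
`S ⊆ A ⊆ ⟨S⟩` and `2|A + A| ≤ R²|A|` then `A + A + A + A = ⟨S⟩`. -/
theorem fourier_growth_lemma
    (G : Type) [AddCommGroup G] [Fintype G]
    (R : ℝ) (hR : 0 < R)
    (μ : G → ℝ) (hμ0 : ∀ x, 0 ≤ μ x) (hμ1 : ∑ x : G, μ x = 1)
    (hchar : ∀ χ : G → ℂ, χ 0 = 1 → (∀ x y : G, χ (x + y) = χ x * χ y) →
      ‖∑ x : G, (μ x : ℂ) * χ x‖ ≤ 1 / R ∨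
        (∑ x : G, (μ x : ℂ) * χ x) = 1)
    (A : Set G) (hA : A.Nonempty) :
    (2 * ((A + {x : G | μ x ≠ 0}).ncard : ℝ) >
      min (R ^ 2 * (A.ncard : ℝ))
        (((AddSubgroup.closure {x : G | μ x ≠ 0} : AddSubgroup G) : Set G).ncard : ℝ)) ∧
    ({x : G | μ x ≠ 0} ⊆ A →
      A ⊆ ((AddSubgroup.closure {x : G | μ x ≠ 0} : AddSubgroup G) : Set G) →
      2 * ((A + A).ncard : ℝ) ≤ R ^ 2 * (A.ncard : ℝ) →
      A + A + A + A =
        ((AddSubgroup.closure {x : G | μ x ≠ 0} : AddSubgroup G) : Set G)) := by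
  set H := AddSubgroup.closure {x : G | μ x ≠ 0}
  have growth : min (R ^ 2 * (A.ncard : ℝ)) ((H : Set G).ncard : ℝ) <
      2 * ((A + {x : G | μ x ≠ 0}).ncard : ℝ) :=
    min_lt_two_mul_ncard_add_support hR hμ0 hμ1
      (fun χ ↦ hchar χ χ.map_zero_eq_one χ.map_add_eq_mul) hA
  refine ⟨growth, fun hSA hAH hdoubling ↦ ?_⟩
  have hAA : A + A ⊆ H := Set.add_subset_iff.2 fun x hx y hy ↦ H.add_mem (hAH hx) (hAH hy)
  have add_support_le : ((A + {x : G | μ x ≠ 0}).ncard : ℝ) ≤ (A + A).ncard := by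
    exact_mod_cast Set.ncard_le_ncard (Set.add_subset_add_left hSA) (Set.toFinite _)
  have large : ((H : Set G).ncard : ℝ) < (A + A).ncard + (A + A).ncard := by
    rcases min_lt_iff.1 growth with h | h <;> linarith
  rw [add_assoc (A + A)]
  exact add_eq_coe_of_ncard_lt_ncard_add_ncard hAA hAA (by exact_mod_cast large)
end

section
/- Let U, V, Z be finite abelian groups, written additively, let T be a group acting on U and on V by automorphisms, and let β : U × V → Z be a bi-additive map (β(u+u', v) = β(u,v) + β(u',v) and β(u, v+v') = β(u,v) + β(u,v') for all u, u' ∈ U and v, v' ∈ V) which is T-invariant: β(t•u, t•v) = β(u,v) for all u ∈ U, v ∈ V, t ∈ T. Let R > 0 be a real number and assume that every T-invariant subgroup U' of U with U' ≠ U has index at least R in U (this holds in particular if every T-simple composition factor of U has order at least R). Let B = {β(u,v) : u ∈ U, v ∈ V} and let W = ⟨B⟩ be the subgroup of Z generated by B. Then for every nonempty subset A ⊆ Z one has 2·|A + B| > min(R²·|A|, |W|). In particular, if B ⊆ A ⊆ W and 2·|A + A| ≤ R²·|A|, then A + A + A + A = W. -/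
open scoped Pointwise

set_option synthInstance.maxHeartbeats 400000
set_option maxHeartbeats 1000000

/-! Suppose first that `Z = W`. For a nontrivial character `χ` of `W`, the elements `u` with
`χ (β u v) = 1` for all `v` form a proper `T`-invariant subgroup of `U`, hence one of index at
least `R`, and orthogonality in `v` gives `|∑ χ (β u v)| ≤ |U| |V| / R`. Feeding this into
Parseval's identity bounds the number of collisions of `(a, u, v) ↦ a + β u v` on `A × U × V`,
and by Cauchy–Schwarz `R² |A| |W| < |A + B| (R² |A| + |W|)`, so
`2 |A + B| > min (R² |A|, |W|)`.

In general, decompose `A` along the cosets of `W`. The pieces have disjoint sums with `B`, and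
either one of them already has more than `|W| / 2` sums, or every piece grows by the factor
`R² / 2`.

The covering statement is the pigeonhole principle: a subset of `W` with more than `|W| / 2`
elements has sumset `W`. -/

open Finset

/-- The number of ordered pairs of indices at which a finite family takes equal values, i.e. the
squared `ℓ²` norm of its multiplicity function. -/
def collisionCount {κ α : Type*} [Fintype κ] [DecidableEq α] (f : κ → α) : ℕ :=
  #{p : κ × κ | f p.1 = f p.2}

section collisionCount

variable {κ α : Type*} [Fintype κ] [DecidableEq α] {f : κ → α}

lemma collisionCount_of_injective (hf : f.Injective) : collisionCount f = Fintype.card κ := by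
  classical
  have collisions_eq_diag : ({p : κ × κ | f p.1 = f p.2} : Finset (κ × κ)) = univ.diag := by
    ext p
    simp [hf.eq_iff]
  rw [collisionCount, collisions_eq_diag, diag_card, Finset.card_univ]

lemma collisionCount_eq_sum_card_fiber_sq (f : κ → α) :
    collisionCount f = ∑ z ∈ univ.image f, #{k | f k = z} ^ 2 := by
  rw [collisionCount, card_eq_sum_card_fiberwise (f := fun p : κ × κ ↦ f p.1) (t := univ.image f)
    fun p _ ↦ mem_coe.2 (mem_image_of_mem f (mem_univ p.1))]
  refine sum_congr rfl fun z _ ↦ ?_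
  rw [sq, ← card_product]
  congr 1
  grind

lemma sq_card_le_card_image_mul_collisionCount (f : κ → α) :
    Fintype.card κ ^ 2 ≤ #(univ.image f) * collisionCount f := by
  rw [← Finset.card_univ, card_eq_sum_card_image f, collisionCount_eq_sum_card_fiber_sq]
  exact sq_sum_le_card_mul_sum_sq

end collisionCount

section Fourier

variable {G : Type*} [AddCommGroup G] [Fintype G] [DecidableEq G]

lemma sum_addChar_norm_sum_sq {κ : Type*} [Fintype κ] (f : κ → G) :
    ∑ χ : AddChar G ℂ, ‖∑ k, χ (f k)‖ ^ 2 = (Fintype.card G * collisionCount f : ℝ) := by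
  have expand (χ : AddChar G ℂ) :
      (‖∑ k, χ (f k)‖ ^ 2 : ℂ) = ∑ p : κ × κ, χ (f p.1 - f p.2) := by
    rw [← Complex.mul_conj', map_sum, sum_mul_sum, Fintype.sum_prod_type]
    simp_rw [sub_eq_add_neg, AddChar.map_add_eq_mul, AddChar.map_neg_eq_conj]
  have orthogonality :
      ∑ χ : AddChar G ℂ, (‖∑ k, χ (f k)‖ ^ 2 : ℂ) = Fintype.card G * collisionCount f := by
    simp_rw [expand]
    rw [sum_comm]
    simp_rw [AddChar.sum_apply_eq_ite, sub_eq_zero]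
    rw [← sum_filter, sum_const, nsmul_eq_mul, mul_comm, collisionCount]
  exact_mod_cast orthogonality

variable {ι : Type*} [Fintype ι] {b : ι → G} {R : ℝ}

lemma sq_mul_collisionCount_add_le (hR : 0 ≤ R)
    (hb : ∀ χ : AddChar G ℂ, χ ≠ 0 → R * ‖∑ i, χ (b i)‖ ≤ Fintype.card ι) (A : Finset G) :
    R ^ 2 * (Fintype.card G * collisionCount fun k : A × ι ↦ (k.1 + b k.2 : G)) ≤
      Fintype.card ι ^ 2 * (Fintype.card G * #A + (R ^ 2 - 1) * #A ^ 2) := by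
  have factor (χ : AddChar G ℂ) :
      ∑ k : A × ι, χ (k.1 + b k.2) = (∑ a : A, χ a) * ∑ i, χ (b i) := by
    simp_rw [AddChar.map_add_eq_mul, sum_mul_sum, Fintype.sum_prod_type]
  have parseval_A : ∑ χ : AddChar G ℂ, ‖∑ a : A, χ a‖ ^ 2 = (Fintype.card G * #A : ℝ) := by
    rw [sum_addChar_norm_sum_sq, collisionCount_of_injective Subtype.val_injective,
      Fintype.card_coe]
  have pointwise (χ : AddChar G ℂ) :
      R ^ 2 * (‖∑ a : A, χ a‖ ^ 2 * ‖∑ i, χ (b i)‖ ^ 2) ≤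
        Fintype.card ι ^ 2 *
          (‖∑ a : A, χ a‖ ^ 2 + if χ = 0 then (R ^ 2 - 1) * (#A : ℝ) ^ 2 else 0) := by
    split_ifs with hχ
    · subst hχ
      simp only [AddChar.zero_apply, sum_const, Finset.card_univ, Fintype.card_coe, nsmul_eq_mul,
        mul_one, Complex.norm_natCast]
      linarith
    · calc R ^ 2 * (‖∑ a : A, χ a‖ ^ 2 * ‖∑ i, χ (b i)‖ ^ 2)
          = (R * ‖∑ i, χ (b i)‖) ^ 2 * ‖∑ a : A, χ a‖ ^ 2 := by ring
        _ ≤ Fintype.card ι ^ 2 * (‖∑ a : A, χ a‖ ^ 2 + 0) := by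
          rw [add_zero]; gcongr; exact hb χ hχ
  calc R ^ 2 * (Fintype.card G * collisionCount fun k : A × ι ↦ (k.1 + b k.2 : G))
      = ∑ χ : AddChar G ℂ, R ^ 2 * (‖∑ a : A, χ a‖ ^ 2 * ‖∑ i, χ (b i)‖ ^ 2) := by
        simp_rw [← sum_addChar_norm_sum_sq, factor, norm_mul, mul_pow, mul_sum]
    _ ≤ ∑ χ : AddChar G ℂ, Fintype.card ι ^ 2 *
          (‖∑ a : A, χ a‖ ^ 2 + if χ = 0 then (R ^ 2 - 1) * (#A : ℝ) ^ 2 else 0) :=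
        sum_le_sum fun χ _ ↦ pointwise χ
    _ = Fintype.card ι ^ 2 * (Fintype.card G * #A + (R ^ 2 - 1) * #A ^ 2) := by
        rw [← mul_sum, sum_add_distrib, parseval_A, sum_ite_eq' univ, if_pos (mem_univ _)]

lemma sq_mul_card_mul_card_lt_card_add_mul [Nonempty ι] (hR : 0 ≤ R)
    (hb : ∀ χ : AddChar G ℂ, χ ≠ 0 → R * ‖∑ i, χ (b i)‖ ≤ Fintype.card ι) {A : Finset G}
    (hA : A.Nonempty) :
    R ^ 2 * #A * Fintype.card G < #(A + univ.image b) * (R ^ 2 * #A + Fintype.card G) := by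
  set E := collisionCount fun k : A × ι ↦ (k.1 + b k.2 : G)
  have image_eq : univ.image (fun k : A × ι ↦ (k.1 + b k.2 : G)) = A + univ.image b := by
    ext z; simp [mem_add]
  have cauchy_schwarz : ((#A * Fintype.card ι) ^ 2 : ℝ) ≤ #(A + univ.image b) * E := by
    have := sq_card_le_card_image_mul_collisionCount fun k : A × ι ↦ (k.1 + b k.2 : G)
    rw [image_eq, Fintype.card_prod, Fintype.card_coe] at this
    exact_mod_cast this
  have hA_pos : (0 : ℝ) < #A := by exact_mod_cast hA.card_pos
  have hι_pos : (0 : ℝ) < Fintype.card ι := by exact_mod_cast Fintype.card_pos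
  have hAb_pos : (0 : ℝ) < #(A + univ.image b) := by
    exact_mod_cast (hA.add (univ_nonempty.image b)).card_pos
  refine lt_of_mul_lt_mul_left (a := (#A * Fintype.card ι ^ 2 : ℝ)) ?_ (by positivity)
  calc (#A * Fintype.card ι ^ 2 : ℝ) * (R ^ 2 * #A * Fintype.card G)
      = R ^ 2 * Fintype.card G * (#A * Fintype.card ι) ^ 2 := by ring
    _ ≤ R ^ 2 * Fintype.card G * (#(A + univ.image b) * E) := by gcongr
    _ = #(A + univ.image b) * (R ^ 2 * (Fintype.card G * E)) := by ring
    _ ≤ #(A + univ.image b) *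
          (Fintype.card ι ^ 2 * (Fintype.card G * #A + (R ^ 2 - 1) * #A ^ 2)) := by
        gcongr ?_ * ?_; exact sq_mul_collisionCount_add_le hR hb A
    _ < #(A + univ.image b) *
          (Fintype.card ι ^ 2 * (Fintype.card G * #A + R ^ 2 * #A ^ 2)) := by
        gcongr; linarith
    _ = #A * Fintype.card ι ^ 2 *
          (#(A + univ.image b) * (R ^ 2 * #A + Fintype.card G)) := by ring

lemma min_lt_two_mul_of_mul_lt_mul_add {x y N : ℝ} (hx : 0 ≤ x) (hy : 0 ≤ y)
    (h : x * y < N * (x + y)) : min x y < 2 * N := by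
  by_contra! hN
  obtain ⟨hNx, hNy⟩ := le_min_iff.1 hN
  linarith [mul_le_mul_of_nonneg_right hNx hy, mul_le_mul_of_nonneg_right hNy hx]

lemma min_lt_two_mul_card_add_of_norm_sum_le [Nonempty ι] (hR : 0 ≤ R)
    (hb : ∀ χ : AddChar G ℂ, χ ≠ 0 → R * ‖∑ i, χ (b i)‖ ≤ Fintype.card ι) {A : Finset G}
    (hA : A.Nonempty) :
    min (R ^ 2 * #A) (Fintype.card G) < (2 * #(A + univ.image b) : ℝ) :=
  min_lt_two_mul_of_mul_lt_mul_add (by positivity) (by positivity)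
    (sq_mul_card_mul_card_lt_card_add_mul hR hb hA)

end Fourier

section CosetDecomposition

lemma min_sum_lt_sum {ι : Type*} {s : Finset ι} (hs : s.Nonempty) {x N : ι → ℝ} {y : ℝ}
    (hN : ∀ i ∈ s, 0 ≤ N i) (h : ∀ i ∈ s, min (x i) y < N i) :
    min (∑ i ∈ s, x i) y < ∑ i ∈ s, N i := by
  by_cases hy : ∃ i ∈ s, y < N i
  · obtain ⟨i, hi, hyi⟩ := hy
    exact min_lt_of_right_lt (hyi.trans_le (single_le_sum hN hi))
  · push Not at hy
    exact min_lt_of_left_lt (sum_lt_sum_of_nonempty hs fun i hi ↦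
      (min_lt_iff.1 (h i hi)).resolve_right (hy i hi).not_gt)

variable {Z : Type*} [AddCommGroup Z] [DecidableEq Z] {W : AddSubgroup Z}

lemma exists_eq_vadd_image_coe {A : Finset Z} {a : Z} (hA : ∀ x ∈ A, -a + x ∈ W) :
    ∃ A' : Finset W, A = a +ᵥ A'.image ((↑) : W → Z) := by
  have hAW : ((-a +ᵥ A : Finset Z) : Set Z) ⊆ (↑) '' (Set.univ : Set W) := by
    rw [Set.image_univ, Subtype.range_coe, coe_vadd_finset]
    rintro _ ⟨x, hx, rfl⟩
    exact hA x hx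
  obtain ⟨A', -, hA'⟩ := subset_set_image_iff.1 hAW
  exact ⟨A', by rw [hA', vadd_neg_vadd]⟩

variable {B : Finset W} {c d y : ℝ}

lemma min_lt_mul_card_add_image_of_mk_eq
    (hB : ∀ A : Finset W, A.Nonempty → min (c * #A) y < d * #(A + B)) {A : Finset Z}
    (hA : A.Nonempty) {q : Z ⧸ W} (hq : ∀ x ∈ A, (x : Z ⧸ W) = q) :
    min (c * #A) y < d * #(A + B.image ((↑) : W → Z)) := by
  obtain ⟨a, ha⟩ := hA
  obtain ⟨A', rfl⟩ := exists_eq_vadd_image_coe fun x hx ↦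
    QuotientAddGroup.eq.1 ((hq a ha).trans (hq x hx).symm)
  have image_add : A'.image ((↑) : W → Z) + B.image (↑) = (A' + B).image (↑) :=
    (image_add W.subtype).symm
  rw [vadd_add_assoc, image_add, card_vadd_finset, card_vadd_finset,
    card_image_of_injective _ Subtype.val_injective,
    card_image_of_injective _ Subtype.val_injective]
  exact hB A' (image_nonempty.1 (vadd_finset_nonempty.1 ⟨a, ha⟩))

lemma min_lt_mul_card_add_image_of_addSubgroup (hd : 0 ≤ d)
    (hB : ∀ A : Finset W, A.Nonempty → min (c * #A) y < d * #(A + B)) {A : Finset Z}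
    (hA : A.Nonempty) :
    min (c * #A) y < d * #(A + B.image ((↑) : W → Z)) := by
  classical
  set B' := B.image ((↑) : W → Z)
  set Q := A.image ((↑) : Z → Z ⧸ W)
  let coset (q : Z ⧸ W) : Finset Z := {x ∈ A | (x : Z ⧸ W) = q}
  have coset_growth (q) (hq : q ∈ Q) : min (c * #(coset q)) y < d * #(coset q + B') := by
    obtain ⟨a, ha, rfl⟩ := mem_image.1 hq
    exact min_lt_mul_card_add_image_of_mk_eq hB ⟨a, by simpa [coset] using ha⟩
      fun x hx ↦ (mem_filter.1 hx).2
  have mk_eq_of_mem_add {q : Z ⧸ W} {z : Z} (hz : z ∈ coset q + B') : (z : Z ⧸ W) = q := by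
    obtain ⟨x, hx, b, hb, rfl⟩ := mem_add.1 hz
    obtain ⟨w, -, rfl⟩ := mem_image.1 hb
    simpa using (mem_filter.1 hx).2
  have disjoint_sums : (Q : Set (Z ⧸ W)).PairwiseDisjoint fun q ↦ coset q + B' :=
    fun q _ q' _ hqq' ↦ disjoint_left.2 fun z hz hz' ↦
      hqq' ((mk_eq_of_mem_add hz).symm.trans (mk_eq_of_mem_add hz'))
  have sum_card_le : ∑ q ∈ Q, #(coset q + B') ≤ #(A + B') := by
    rw [← card_biUnion disjoint_sums]
    exact card_le_card (biUnion_subset.2 fun q _ ↦ add_subset_add_right (filter_subset _ _))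
  calc min (c * #A) y = min (∑ q ∈ Q, c * (#(coset q) : ℝ)) y := by
        rw [card_eq_sum_card_image ((↑) : Z → Z ⧸ W) A, Nat.cast_sum, mul_sum]
    _ < ∑ q ∈ Q, d * (#(coset q + B') : ℝ) :=
        min_sum_lt_sum (hA.image _) (fun _ _ ↦ by positivity) coset_growth
    _ = d * (∑ q ∈ Q, #(coset q + B') : ℕ) := by rw [Nat.cast_sum, mul_sum]
    _ ≤ d * #(A + B') := by gcongr

end CosetDecomposition

section Bilinear

variable {U V G : Type*} [AddCommGroup U] [AddCommGroup V] [AddCommGroup G]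

/-- The set of values of a bi-additive map; in general not a subgroup. -/
def valueSet (β : U →+ V →+ G) : Set G :=
  {z | ∃ u v, z = β u v}

lemma coe_image_univ_eq_valueSet [Fintype U] [Fintype V] [DecidableEq G] (β : U →+ V →+ G) :
    ((univ.image fun p : U × V ↦ β p.1 p.2 : Finset G) : Set G) = valueSet β := by
  ext z
  simp [valueSet, eq_comm]

/-- The annihilator of `V` in `U` under the character-valued pairing `χ ∘ β`. -/
def leftAnnihilator (β : U →+ V →+ G) (χ : AddChar G ℂ) : AddSubgroup U where
  carrier := {u | χ.compAddMonoidHom (β u) = 0}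
  zero_mem' := by ext; simp
  add_mem' {u u'} hu hu' := by
    ext v
    simp_all [AddChar.ext_iff, AddChar.map_add_eq_mul]
  neg_mem' {u} hu := by
    ext v
    simp_all [AddChar.ext_iff, AddChar.map_neg_eq_inv]

variable {β : U →+ V →+ G} {χ : AddChar G ℂ}

lemma mem_leftAnnihilator {u : U} : u ∈ leftAnnihilator β χ ↔ ∀ v, χ (β u v) = 1 :=
  AddChar.eq_zero_iff

lemma smul_mem_leftAnnihilator {T : Type*} [Group T] [DistribMulAction T U] [DistribMulAction T V]
    (hβ : ∀ (t : T) u v, β (t • u) (t • v) = β u v) (t : T) {u : U}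
    (hu : u ∈ leftAnnihilator β χ) : t • u ∈ leftAnnihilator β χ := by
  rw [mem_leftAnnihilator] at hu ⊢
  intro v
  rw [← smul_inv_smul t v, hβ]
  exact hu _

lemma leftAnnihilator_ne_top
    (hβ : AddSubgroup.closure (valueSet β) = ⊤) (hχ : χ ≠ 0) :
    leftAnnihilator β χ ≠ ⊤ := by
  contrapose! hχ
  have trivial_on_range : (valueSet β).EqOn χ.toAddMonoidHom (AddChar.toAddMonoidHom 0) := by
    rintro _ ⟨u, v, rfl⟩
    exact congrArg Additive.ofMul (mem_leftAnnihilator.1 (hχ ▸ AddSubgroup.mem_top u) v)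
  exact AddChar.toAddMonoidHomEquiv.injective (AddMonoidHom.eq_of_eqOn_dense hβ trivial_on_range)

lemma sum_addChar_apply_apply [Fintype U] [Fintype V] (β : U →+ V →+ G) (χ : AddChar G ℂ) :
    ∑ p : U × V, χ (β p.1 p.2) = Nat.card (leftAnnihilator β χ) * Fintype.card V := by
  classical
  have inner_sum (u : U) :
      ∑ v, χ (β u v) = if u ∈ leftAnnihilator β χ then (Fintype.card V : ℂ) else 0 :=
    AddChar.sum_eq_ite (χ.compAddMonoidHom (β u))
  rw [Fintype.sum_prod_type, sum_congr rfl fun u _ ↦ inner_sum u, ← sum_filter, sum_const,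
    nsmul_eq_mul, Nat.card_eq_fintype_card, Fintype.card_subtype]

lemma index_leftAnnihilator_mul_norm_sum [Fintype U] [Fintype V] (β : U →+ V →+ G)
    (χ : AddChar G ℂ) :
    (leftAnnihilator β χ).index * ‖∑ p : U × V, χ (β p.1 p.2)‖ = Fintype.card (U × V) := by
  rw [sum_addChar_apply_apply, norm_mul, Complex.norm_natCast, Complex.norm_natCast,
    Fintype.card_prod, ← Nat.card_eq_fintype_card (α := U),
    ← (leftAnnihilator β χ).index_mul_card]
  push_cast
  ring

lemma min_lt_two_mul_card_add_of_closure_eq_top [Fintype U] [Fintype V] [Fintype G]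
    [DecidableEq G] {R : ℝ} (hR : 0 ≤ R)
    (hβ : AddSubgroup.closure (valueSet β) = ⊤)
    (hind : ∀ χ : AddChar G ℂ, leftAnnihilator β χ ≠ ⊤ → R ≤ (leftAnnihilator β χ).index)
    {A : Finset G} (hA : A.Nonempty) :
    min (R ^ 2 * #A) (Fintype.card G) <
      (2 * #(A + univ.image fun p : U × V ↦ β p.1 p.2) : ℝ) := by
  refine min_lt_two_mul_card_add_of_norm_sum_le hR (fun χ hχ ↦ ?_) hA
  rw [← index_leftAnnihilator_mul_norm_sum β χ]
  gcongr
  exact hind χ (leftAnnihilator_ne_top hβ hχ)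

end Bilinear

lemma finite_closure_of_isOfFinAddOrder {Z : Type*} [AddCommGroup Z] {s : Set Z} [Finite s]
    (hs : ∀ x ∈ s, IsOfFinAddOrder x) : Finite (AddSubgroup.closure s) := by
  have closure_le_torsion : AddSubgroup.closure s ≤ AddCommGroup.torsion Z :=
    (AddSubgroup.closure_le _).2 hs
  exact AddCommGroup.finite_of_fg_isAddTorsion _ fun w ↦
    AddSubmonoid.isOfFinAddOrder_coe.1 (closure_le_torsion w.2)

section Covering

variable {Z : Type*} [AddGroup Z] {W : AddSubgroup Z} [Finite W]

lemma add_eq_coe_of_ncard_lt_ncard_add_ncard_s16 {S S' : Set Z} (hS : S ⊆ W) (hS' : S' ⊆ W)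
    (h : (W : Set Z).ncard < S.ncard + S'.ncard) : S + S' = W := by
  refine (Set.add_subset_iff.2 fun s hs s' hs' ↦ W.add_mem (hS hs) (hS' hs')).antisymm fun w hw ↦ ?_
  have hCW : (fun s ↦ -s + w) '' S ⊆ W := by
    rintro _ ⟨s, hs, rfl⟩
    exact W.add_mem (W.neg_mem (hS hs)) hw
  have card_C : ((fun s ↦ -s + w) '' S).ncard = S.ncard :=
    Set.ncard_image_of_injective _ ((add_left_injective w).comp neg_injective)
  obtain ⟨_, ⟨s, hs, rfl⟩, hs'⟩ : ((fun s ↦ -s + w) '' S ∩ S').Nonempty := by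
    rw [← Set.not_disjoint_iff_nonempty_inter]
    intro hdisj
    have := Set.ncard_le_ncard (Set.union_subset hCW hS') (W : Set Z).toFinite
    rw [Set.ncard_union_eq hdisj ((W : Set Z).toFinite.subset hCW)
      ((W : Set Z).toFinite.subset hS')] at this
    omega
  exact ⟨s, hs, _, hs', add_neg_cancel_left s w⟩

lemma add_add_add_eq_coe_of_min_lt {A B : Set Z} {x : ℝ} (hBA : B ⊆ A) (hAW : A ⊆ W)
    (hgrowth : min x (W : Set Z).ncard < 2 * (A + B).ncard) (hdoubling : 2 * (A + A).ncard ≤ x) :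
    A + A + A + A = W := by
  have hAAW : A + A ⊆ W := Set.add_subset_iff.2 fun a ha a' ha' ↦ W.add_mem (hAW ha) (hAW ha')
  have ncard_add_le : (A + B).ncard ≤ (A + A).ncard :=
    Set.ncard_le_ncard (Set.add_subset_add_left hBA) ((W : Set Z).toFinite.subset hAAW)
  have min_lt : min x (W : Set Z).ncard < 2 * (A + A).ncard := hgrowth.trans_le (by gcongr)
  have ncard_lt : ((W : Set Z).ncard : ℝ) < 2 * (A + A).ncard :=
    (min_lt_iff.1 min_lt).resolve_left hdoubling.not_gt
  rw [add_assoc (A + A)]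
  refine add_eq_coe_of_ncard_lt_ncard_add_ncard_s16 hAAW hAAW ?_
  rw [← two_mul]
  exact_mod_cast ncard_lt

end Covering

section Growth

variable {U V Z : Type*} [AddCommGroup U] [AddCommGroup V] [AddCommGroup Z]

/-- A bi-additive map with its codomain restricted to the subgroup generated by its values. -/
def codRestrictClosure (β : U →+ V →+ Z) : U →+ V →+ AddSubgroup.closure (valueSet β) :=
  AddMonoidHom.mk' (fun u ↦ (β u).codRestrict _ fun v ↦ AddSubgroup.subset_closure ⟨u, v, rfl⟩)
    fun u u' ↦ by ext v; simp

lemma coe_image_valueSet_codRestrictClosure (β : U →+ V →+ Z) :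
    (↑) '' valueSet (codRestrictClosure β) = valueSet β := by
  ext z
  constructor
  · rintro ⟨_, ⟨u, v, rfl⟩, rfl⟩
    exact ⟨u, v, rfl⟩
  · rintro ⟨u, v, rfl⟩
    exact ⟨_, ⟨u, v, rfl⟩, rfl⟩

lemma closure_valueSet_codRestrictClosure (β : U →+ V →+ Z) :
    AddSubgroup.closure (valueSet (codRestrictClosure β)) = ⊤ := by
  rw [← Set.preimage_image_eq (valueSet (codRestrictClosure β)) Subtype.val_injective,
    coe_image_valueSet_codRestrictClosure, AddSubgroup.closure_closure_coe_preimage]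

variable [Finite U] [Finite V]

lemma finite_valueSet (β : U →+ V →+ Z) : (valueSet β).Finite :=
  (Set.finite_range fun p : U × V ↦ β p.1 p.2).subset fun _ ⟨u, v, h⟩ ↦ ⟨(u, v), h.symm⟩

lemma finite_closure_valueSet (β : U →+ V →+ Z) : Finite (AddSubgroup.closure (valueSet β)) := by
  have := (finite_valueSet β).to_subtype
  refine finite_closure_of_isOfFinAddOrder ?_
  rintro _ ⟨u, v, rfl⟩
  exact (β u).isOfFinAddOrder (isOfFinAddOrder_of_finite v)

variable {T : Type*} [Group T] [DistribMulAction T U] [DistribMulAction T V] {R : ℝ} {A : Set Z}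

lemma min_lt_two_mul_ncard_add_valueSet (β : U →+ V →+ Z)
    (hβT : ∀ (t : T) (u : U) (v : V), β (t • u) (t • v) = β u v) (hR : 0 ≤ R)
    (hind : ∀ U' : AddSubgroup U, (∀ (t : T), ∀ u ∈ U', t • u ∈ U') → U' ≠ ⊤ → R ≤ U'.index)
    (hAfin : A.Finite) (hA : A.Nonempty) :
    min (R ^ 2 * A.ncard) ((AddSubgroup.closure (valueSet β) : Set Z).ncard : ℝ) <
      2 * (A + valueSet β).ncard := by
  classical
  have := Fintype.ofFinite U
  have := Fintype.ofFinite V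
  have := finite_closure_valueSet β
  have := Fintype.ofFinite (AddSubgroup.closure (valueSet β))
  lift A to Finset Z using hAfin
  have codRestrict_smul_smul (t : T) (u : U) (v : V) :
      codRestrictClosure β (t • u) (t • v) = codRestrictClosure β u v := Subtype.ext (hβT t u v)
  have growth := min_lt_mul_card_add_image_of_addSubgroup zero_le_two
    (fun A' hA' ↦ min_lt_two_mul_card_add_of_closure_eq_top hR
      (closure_valueSet_codRestrictClosure β)
      (fun χ ↦ hind _ fun t u ↦ smul_mem_leftAnnihilator codRestrict_smul_smul t) (A := A') hA') hA
  rwa [← Set.ncard_coe_finset (A + _), coe_add, coe_image, coe_image_univ_eq_valueSet,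
    coe_image_valueSet_codRestrictClosure, ← Set.ncard_coe_finset A, ← Nat.card_eq_fintype_card,
    ← SetLike.coe_sort_coe, Nat.card_coe_set_eq] at growth

theorem bilinear_growth_lemma_general (β : U →+ V →+ Z)
    (hβT : ∀ (t : T) (u : U) (v : V), β (t • u) (t • v) = β u v) (hR : 0 ≤ R)
    (hind : ∀ U' : AddSubgroup U, (∀ (t : T), ∀ u ∈ U', t • u ∈ U') → U' ≠ ⊤ → R ≤ U'.index)
    (hAfin : A.Finite) (hA : A.Nonempty) :
    min (R ^ 2 * A.ncard) ((AddSubgroup.closure (valueSet β) : Set Z).ncard : ℝ) <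
        2 * (A + valueSet β).ncard ∧
      (valueSet β ⊆ A → A ⊆ AddSubgroup.closure (valueSet β) →
        2 * ((A + A).ncard : ℝ) ≤ R ^ 2 * A.ncard →
        A + A + A + A = AddSubgroup.closure (valueSet β)) :=
  have growth := min_lt_two_mul_ncard_add_valueSet β hβT hR hind hAfin hA
  have := finite_closure_valueSet β
  ⟨growth, fun hBA hAW ↦ add_add_add_eq_coe_of_min_lt hBA hAW growth⟩

end Growth

/-- **Growth lemma for images of a bilinear map.**
Let `U, V, Z` be finite abelian groups, `T` a group acting on `U` and `V`, and
`β : U × V → Z` a `T`-invariant bi-additive map. If every proper `T`-invariant subgroup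
of `U` has index at least `R`, and `B = β(U,V)`, `W = ⟨B⟩`, then for every nonempty
`A ⊆ Z` we have `2|A + B| > min(R²|A|, |W|)`; in particular if `B ⊆ A ⊆ W` and
`2|A + A| ≤ R²|A|` then `A + A + A + A = W`. -/
theorem bilinear_growth_lemma
    (U V Z : Type) [AddCommGroup U] [AddCommGroup V] [AddCommGroup Z]
    [Fintype U] [Fintype V] [Fintype Z]
    (T : Type) [Group T] [DistribMulAction T U] [DistribMulAction T V]
    (β : U → V → Z)
    (hβ1 : ∀ u u' v, β (u + u') v = β u v + β u' v)
    (hβ2 : ∀ u v v', β u (v + v') = β u v + β u v')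
    (hβT : ∀ (t : T) (u : U) (v : V), β (t • u) (t • v) = β u v)
    (R : ℝ) (hR : 0 < R)
    (hind : ∀ U' : AddSubgroup U, (∀ (t : T), ∀ u ∈ U', t • u ∈ U') → U' ≠ ⊤ →
      R ≤ (U'.index : ℝ))
    (A : Set Z) (hA : A.Nonempty) :
    (2 * ((A + {z : Z | ∃ u v, z = β u v}).ncard : ℝ) >
      min (R ^ 2 * (A.ncard : ℝ))
        (((AddSubgroup.closure {z : Z | ∃ u v, z = β u v} : AddSubgroup Z) :
            Set Z).ncard : ℝ)) ∧
    ({z : Z | ∃ u v, z = β u v} ⊆ A →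
      A ⊆ ((AddSubgroup.closure {z : Z | ∃ u v, z = β u v} : AddSubgroup Z) : Set Z) →
      2 * ((A + A).ncard : ℝ) ≤ R ^ 2 * (A.ncard : ℝ) →
      A + A + A + A =
        ((AddSubgroup.closure {z : Z | ∃ u v, z = β u v} : AddSubgroup Z) : Set Z)) := by
  exact bilinear_growth_lemma_general (AddMonoidHom.mk' (fun u ↦ AddMonoidHom.mk' (β u) (hβ2 u))
    fun u u' ↦ AddMonoidHom.ext (hβ1 u u')) hβT hR.le hind A.toFinite hA
end

section
/- Let G be a group and let N ⊴ H ≤ G be subgroups with N normal in H. For a subset B ⊆ G let tr(B) denote the image of B ∩ H under the quotient map H → H/N. Let A ⊆ G be a finite nonempty symmetric subset and K ≥ 1 a real number with |A^3| ≤ K·|A|. Then for every natural number k ≥ 2: |tr(A^k)|·|A| ≤ |A^{k+5}|·|tr(A^2)|, and consequently |tr(A^k)| ≤ K^{k+3}·|tr(A^2)|. -/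
open scoped Pointwise

set_option synthInstance.maxHeartbeats 400000
set_option maxHeartbeats 1000000

/-- The trace of a set `B ⊆ G` in the section `H/N`: the image of `B ∩ H` under the
quotient map `H → H/N`. -/
def sectionTrace {G : Type*} [Group G] (H N : Subgroup G) (B : Set G) :
    Set (↥H ⧸ N.subgroupOf H) :=
  QuotientGroup.mk '' (Subtype.val ⁻¹' B)

/-! Choose a set `R ⊆ C ∩ H` containing one representative of each coset in the trace of `C`, and
multiply it by `A`. If `r' * a' = r * a` with `r, r' ∈ R` and `a, a' ∈ A`, then
`r⁻¹ * r' = a * a'⁻¹` lies in both `r⁻¹ • R` and `A * A⁻¹`; since the elements of `r⁻¹ • R`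
represent distinct cosets, each product has at most `|tr(A * A⁻¹)|` factorisations. Hence
`|tr(C)| * |A| ≤ |C * A| * |tr(A * A⁻¹)|`, and for `C = A ^ k` small tripling bounds
`|A ^ (k + 1)|`. -/

section Finset

open scoped Finset

variable {G : Type*} [Group G] [DecidableEq G] {R A : Finset G}

theorem convolution_mul_le_card_smul_inter (r : G) {a : G} (ha : a ∈ A) :
    R.convolution A (r * a) ≤ #(r⁻¹ • R ∩ (A * A⁻¹)) :=
  calc
    R.convolution A (r * a) = #(r⁻¹ • R ∩ a • A⁻¹) := by simp [Finset.card_smul_inter_smul]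
    _ ≤ #(r⁻¹ • R ∩ (A * A⁻¹)) := by
      gcongr
      exact Finset.smul_finset_subset_smul ha

theorem card_mul_card_le_of_forall_card_smul_inter_le {n : ℕ}
    (h : ∀ r ∈ R, #(r⁻¹ • R ∩ (A * A⁻¹)) ≤ n) : #R * #A ≤ n * #(R * A) := by
  rw [← Finset.card_product]
  refine Finset.card_le_mul_card_image_of_maps_to (f := fun p ↦ p.1 * p.2)
    (fun p hp ↦ ?_) n fun x hx ↦ ?_
  · rw [Finset.mem_product] at hp
    exact Finset.mul_mem_mul hp.1 hp.2
  · obtain ⟨r, hr, a, ha, rfl⟩ := Finset.mem_mul.1 hx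
    exact (convolution_mul_le_card_smul_inter r ha).trans (h r hr)

end Finset

theorem injOn_mk_smul {G : Type*} [Group G] {N : Subgroup G} {R : Set G}
    (hR : Set.InjOn (QuotientGroup.mk : G → G ⧸ N) R) (g : G) :
    Set.InjOn (QuotientGroup.mk : G → G ⧸ N) (g • R) := by
  rintro _ ⟨r, hr, rfl⟩ _ ⟨s, hs, rfl⟩ hrs
  rw [hR hr hs (MulAction.injective g hrs)]

section SectionTrace

open scoped Finset

variable {G : Type*} [Group G] {H N : Subgroup G} {A B C : Set G}

theorem finite_sectionTrace (hB : B.Finite) : (sectionTrace H N B).Finite :=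
  (hB.preimage Subtype.val_injective.injOn).image _

theorem ncard_smul_inter_le_ncard_sectionTrace {R : Set H}
    (hR : Set.InjOn (QuotientGroup.mk : H → H ⧸ N.subgroupOf H) R) (h : H) (hB : B.Finite) :
    ((h : G) • (Subtype.val '' R) ∩ B).ncard ≤ (sectionTrace H N B).ncard := by
  have smul_image : (h : G) • (Subtype.val '' R) = Subtype.val '' (h • R) :=
    (Set.image_smul_distrib H.subtype h R).symm
  rw [smul_image, ← Set.image_inter_preimage, Set.ncard_image_of_injective _ Subtype.val_injective]
  exact Set.ncard_le_ncard_of_injOn QuotientGroup.mk (fun _ hx ↦ Set.mem_image_of_mem _ hx.2)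
    ((injOn_mk_smul hR h).mono Set.inter_subset_left) (finite_sectionTrace hB)

theorem exists_finset_card_eq_ncard_sectionTrace [DecidableEq G] (H N : Subgroup G)
    (hC : C.Finite) :
    ∃ R : Finset G, ↑R ⊆ C ∧ #R = (sectionTrace H N C).ncard ∧
      ∀ r ∈ R, ∀ B : Finset G, #(r⁻¹ • R ∩ B) ≤ (sectionTrace H N (B : Set G)).ncard := by
  obtain ⟨S, hSC, hS⟩ := Set.exists_subset_bijOn (Subtype.val ⁻¹' C)
    (QuotientGroup.mk : H → H ⧸ N.subgroupOf H)
  have image_subset : Subtype.val '' S ⊆ C := Set.image_subset_iff.2 hSC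
  obtain ⟨R, hR⟩ := (hC.subset image_subset).exists_finset_coe
  refine ⟨R, hR ▸ image_subset, ?_, fun r hr B ↦ ?_⟩
  · rw [← Set.ncard_coe_finset, hR, Set.ncard_image_of_injective _ Subtype.val_injective,
      sectionTrace, ← hS.image_eq, hS.injOn.ncard_image]
  · obtain ⟨h, -, rfl⟩ : r ∈ Subtype.val '' S := hR ▸ hr
    simpa [← Set.ncard_coe_finset, hR] using
      ncard_smul_inter_le_ncard_sectionTrace hS.injOn h⁻¹ B.finite_toSet

theorem ncard_sectionTrace_mul_ncard_le (H N : Subgroup G) (hA : A.Finite) (hC : C.Finite) :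
    (sectionTrace H N C).ncard * A.ncard ≤ (C * A).ncard * (sectionTrace H N (A * A⁻¹)).ncard := by
  classical
  lift A to Finset G using hA
  obtain ⟨R, hRC, hR, card_inter_le⟩ := exists_finset_card_eq_ncard_sectionTrace H N hC
  have card_mul_le : #(R * A) ≤ (C * A).ncard := by
    rw [← Set.ncard_coe_finset, Finset.coe_mul]
    exact Set.ncard_le_ncard (Set.mul_subset_mul_right hRC) (hC.mul A.finite_toSet)
  rw [← hR, Set.ncard_coe_finset, ← Finset.coe_inv, ← Finset.coe_mul]
  calc
    #R * #A
      ≤ (sectionTrace H N ((A * A⁻¹ : Finset G) : Set G)).ncard * #(R * A) :=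
        card_mul_card_le_of_forall_card_smul_inter_le fun r hr ↦ card_inter_le r hr _
    _ ≤ (C * A).ncard * (sectionTrace H N ((A * A⁻¹ : Finset G) : Set G)).ncard := by
      rw [mul_comm]
      gcongr

end SectionTrace

section Pow

variable {G : Type*} [Group G] {A : Set G}

theorem finite_pow (hfin : A.Finite) (n : ℕ) : (A ^ n).Finite := by
  classical
  lift A to Finset G using hfin
  exact Finset.coe_pow A n ▸ (A ^ n).finite_toSet

theorem ncard_pow_le_ncard_pow (hfin : A.Finite) {m n : ℕ} (hm : m ≠ 0) (hmn : m ≤ n) :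
    (A ^ m).ncard ≤ (A ^ n).ncard := by
  classical
  lift A to Finset G using hfin
  simpa [← Finset.coe_pow] using Finset.card_pow_mono hm hmn

theorem ncard_pow_le_of_small_tripling (hfin : A.Finite) (hsym : A⁻¹ = A) {K : ℝ}
    (htrip : ((A ^ 3).ncard : ℝ) ≤ K * A.ncard) {m : ℕ} (hm : 3 ≤ m) :
    ((A ^ m).ncard : ℝ) ≤ K ^ (m - 2) * A.ncard := by
  classical
  lift A to Finset G using hfin
  simp only [← Finset.coe_pow, Set.ncard_coe_finset] at htrip ⊢
  exact Finset.small_pow_of_small_tripling hm htrip (mod_cast hsym)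

end Pow

theorem growth_in_sections_general {G : Type*} [Group G] (H N : Subgroup G) {A : Set G}
    (hfin : A.Finite) (hsym : A⁻¹ = A) {K : ℝ}
    (htrip : ((A ^ 3).ncard : ℝ) ≤ K * A.ncard) {k : ℕ} (hk : 2 ≤ k) :
    (sectionTrace H N (A ^ k)).ncard * A.ncard ≤
        (A ^ (k + 1)).ncard * (sectionTrace H N (A ^ 2)).ncard ∧
      ((sectionTrace H N (A ^ k)).ncard : ℝ) ≤
        K ^ (k - 1) * (sectionTrace H N (A ^ 2)).ncard := by
  have trace_mul_bound : (sectionTrace H N (A ^ k)).ncard * A.ncard ≤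
      (A ^ (k + 1)).ncard * (sectionTrace H N (A ^ 2)).ncard := by
    simpa only [hsym, ← pow_succ, ← sq] using
      ncard_sectionTrace_mul_ncard_le H N hfin (finite_pow hfin k)
  obtain rfl | hne := A.eq_empty_or_nonempty
  · simp [sectionTrace, show k ≠ 0 by lia]
  have card_pos : (0 : ℝ) < A.ncard := mod_cast hne.ncard_pos hfin
  refine ⟨trace_mul_bound, le_of_mul_le_mul_right ?_ card_pos⟩
  calc
    ((sectionTrace H N (A ^ k)).ncard : ℝ) * A.ncard
      ≤ (A ^ (k + 1)).ncard * (sectionTrace H N (A ^ 2)).ncard := mod_cast trace_mul_bound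
    _ ≤ K ^ (k - 1) * A.ncard * (sectionTrace H N (A ^ 2)).ncard := by
      gcongr
      exact ncard_pow_le_of_small_tripling hfin hsym htrip (by lia)
    _ = K ^ (k - 1) * (sectionTrace H N (A ^ 2)).ncard * A.ncard := by ring

/-- **Growth in sections.** If `N ⊴ H ≤ G` and `A` is a finite nonempty symmetric
`K`-tripling subset of `G`, then for `k ≥ 2`,
`|tr(A^k)|·|A| ≤ |A^{k+5}|·|tr(A²)|`, so `|tr(A^k)| ≤ K^{k+3}·|tr(A²)|`. -/
theorem growth_in_sections
    (G : Type) [Group G] (H N : Subgroup G) (hNH : N ≤ H)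
    (hnorm : ∀ h ∈ H, ∀ x ∈ N, h * x * h⁻¹ ∈ N)
    (A : Set G) (hfin : A.Finite) (hne : A.Nonempty) (hsym : A⁻¹ = A)
    (K : ℝ) (hK : 1 ≤ K)
    (htrip : ((A ^ 3).ncard : ℝ) ≤ K * (A.ncard : ℝ))
    (k : ℕ) (hk : 2 ≤ k) :
    (sectionTrace H N (A ^ k)).ncard * A.ncard ≤
        (A ^ (k + 5)).ncard * (sectionTrace H N (A ^ 2)).ncard ∧
      ((sectionTrace H N (A ^ k)).ncard : ℝ) ≤
        K ^ (k + 3) * ((sectionTrace H N (A ^ 2)).ncard : ℝ) := by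
  obtain ⟨trace_mul_bound, growth_bound⟩ := growth_in_sections_general H N hfin hsym htrip hk
  exact ⟨trace_mul_bound.trans
      (Nat.mul_le_mul_right _ (ncard_pow_le_ncard_pow hfin k.succ_ne_zero (by lia))),
    growth_bound.trans (by gcongr; lia)⟩
end

section
/- Let n ≥ 1 be a natural number and let G = ℤⁿ ⋊ S_n be the semidirect product of ℤⁿ by the symmetric group S_n acting by permuting the coordinates. Let r > n! be an integer and let A = {(v, σ) ∈ G : |v_i| ≤ r for all i} (that is, A = [-r,r]ⁿ·S_n). Then for every nilpotent subgroup Γ ≤ G and every natural number m, if A is covered by m left cosets of Γ, then m ≥ n!. -/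
open scoped Pointwise

set_option synthInstance.maxHeartbeats 400000
set_option maxHeartbeats 1000000

/-- The permutation action of `S_n` on `ℤⁿ` by permuting coordinates, as additive
automorphisms: `σ • v = v ∘ σ⁻¹`. -/
def permAddEquiv {n : ℕ} (σ : Equiv.Perm (Fin n)) : (Fin n → ℤ) ≃+ (Fin n → ℤ) :=
  { Equiv.arrowCongr σ (Equiv.refl ℤ) with map_add' := fun _ _ => rfl }

/-- The action of `S_n` on `ℤⁿ` (written multiplicatively) by permuting coordinates,
as a homomorphism to the automorphism group, used to form `ℤⁿ ⋊ S_n`. -/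
def permHom (n : ℕ) : Equiv.Perm (Fin n) →* MulAut (Multiplicative (Fin n → ℤ)) where
  toFun σ := AddEquiv.toMultiplicative (permAddEquiv σ)
  map_one' := by ext x; rfl
  map_mul' σ τ := by ext x; rfl

/-!
Let `Γ` be nilpotent and let `N` be a torsion-free normal subgroup. If `x ∈ Γ ∩ N` and `g ∈ Γ` has
a power `g ^ k` centralizing `N`, then `x` and `g` commute: by downward induction along the lower
central series of `Γ`, one may assume that `g` commutes with `⁅x, g⁆ ∈ N`, and then
`⁅x, g⁆ ^ k = ⁅x, g ^ k⁆ = 1`.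

If fewer cosets of `Γ` than there are permutations covered `A`, then by pigeonhole `Γ` would
contain a nontrivial power of every basis vector. Roots in `N` are unique, so every element of `Γ`
would commute with the basis vectors themselves, that is, `Γ ≤ ℤⁿ`. But `S_n`, which is contained
in `A`, meets `n!` cosets of `ℤⁿ`.
-/

open scoped commutatorElement

section Group

variable {G : Type*} [Group G]

theorem commutatorElement_pow_right_of_commute {x g : G} (h : Commute ⁅x, g⁆ g) (k : ℕ) :
    ⁅x, g ^ k⁆ = ⁅x, g⁆ ^ k := by
  have hconj : ⁅x, g⁆ * g = x * g * x⁻¹ := by simp [commutatorElement_def]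
  calc
    ⁅x, g ^ k⁆ = (x * g * x⁻¹) ^ k * (g ^ k)⁻¹ := by rw [commutatorElement_def, conj_pow]
    _ = ⁅x, g⁆ ^ k := by rw [← hconj, h.mul_pow, mul_inv_cancel_right]

theorem commutatorElement_mem_of_normal {N : Subgroup G} [N.Normal] {x : G} (hx : x ∈ N) (g : G) :
    ⁅x, g⁆ ∈ N :=
  Subgroup.commutator_le_left N ⊤ (Subgroup.commutator_mem_commutator hx (Subgroup.mem_top g))

section TorsionFreeNormal

variable {N : Subgroup G} [N.Normal] [IsMulTorsionFree N] {x g : G} {k : ℕ}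

theorem commute_of_commute_commutatorElement_of_commute_pow (hx : x ∈ N) (hk : k ≠ 0)
    (hpow : Commute x (g ^ k)) (h : Commute ⁅x, g⁆ g) : Commute x g := by
  have hmem : ⁅x, g⁆ ∈ N := commutatorElement_mem_of_normal hx g
  have hone : ⁅x, g⁆ ^ k = 1 := by
    rw [← commutatorElement_pow_right_of_commute h, commutatorElement_eq_one_iff_commute.2 hpow]
  have hroot : (⟨⁅x, g⁆, hmem⟩ : N) ^ k = 1 := Subtype.ext hone
  have hcomm : ⁅x, g⁆ = 1 := congrArg Subtype.val ((pow_eq_one_iff_left hk).1 hroot)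
  exact commutatorElement_eq_one_iff_commute.1 hcomm

theorem commute_of_commute_pow_left (hx : x ∈ N) (hk : k ≠ 0) (h : Commute (x ^ k) g) :
    Commute x g := by
  have hroot : (⟨g * x * g⁻¹, Subgroup.Normal.conj_mem ‹_› x hx g⟩ : N) ^ k = ⟨x, hx⟩ ^ k :=
    Subtype.ext (by simp [conj_pow, h.symm.eq])
  have hconj : g * x * g⁻¹ = x := congrArg Subtype.val (pow_left_injective hk hroot)
  exact (mul_inv_eq_iff_eq_mul.1 hconj).symm

theorem commute_of_isNilpotent_of_pow_mem_centralizer {Γ : Subgroup G} (hΓ : Group.IsNilpotent Γ)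
    (hxN : x ∈ N) (hxΓ : x ∈ Γ) (hgΓ : g ∈ Γ) (hk : k ≠ 0)
    (hgk : g ^ k ∈ Subgroup.centralizer (N : Set G)) : Commute x g := by
  obtain ⟨c, hc⟩ := (Subgroup.isNilpotent_iff_lowerCentralSeries Γ).1 hΓ
  suffices key : ∀ j ≤ c, ∀ y ∈ N, y ∈ Γ.lowerCentralSeries j → Commute y g from
    key 0 c.zero_le x hxN hxΓ
  intro j hj
  induction hj using Nat.decreasingInduction with
  | self =>
    intro y _ hy
    rw [hc, Subgroup.mem_bot] at hy
    exact hy ▸ Commute.one_left g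
  | of_succ j _ ih =>
    intro y hyN hyΓ
    have hpow : Commute y (g ^ k) := hgk y hyN
    have hcomm : ⁅y, g⁆ ∈ Γ.lowerCentralSeries (j + 1) :=
      Subgroup.commutator_mem_commutator hyΓ hgΓ
    exact commute_of_commute_commutatorElement_of_commute_pow hyN hk hpow
      (ih _ (commutatorElement_mem_of_normal hyN g) hcomm)

theorem le_centralizer_of_isNilpotent_of_exists_pow_mem
    [(Subgroup.centralizer (N : Set G)).FiniteIndex] {Γ : Subgroup G} (hΓ : Group.IsNilpotent Γ)
    {X : Set G} (hXN : X ⊆ N) (hXΓ : ∀ x ∈ X, ∃ t ≠ 0, x ^ t ∈ Γ) :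
    Γ ≤ Subgroup.centralizer X := by
  intro g hg x hx
  obtain ⟨t, ht, hxt⟩ := hXΓ x hx
  obtain ⟨k, hk, -, hgk⟩ := Subgroup.exists_pow_mem_of_index_ne_zero
    (Subgroup.FiniteIndex.index_ne_zero (H := Subgroup.centralizer (N : Set G))) g
  have hcomm : Commute (x ^ t) g :=
    commute_of_isNilpotent_of_pow_mem_centralizer hΓ (N.pow_mem (hXN hx) t) hxt hg hk.ne' hgk
  exact commute_of_commute_pow_left (hXN hx) ht hcomm

end TorsionFreeNormal

theorem exists_pow_mem_of_leftCoset_cover {Γ : Subgroup G} {S : Finset G} {x : G}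
    (hcover : ∀ t ≤ S.card, x ^ t ∈ ⋃ g ∈ S, g • (Γ : Set G)) : ∃ t ≠ 0, x ^ t ∈ Γ := by
  simp only [Set.mem_iUnion, mem_leftCoset_iff, SetLike.mem_coe, exists_prop] at hcover
  choose! c hcS hcΓ using hcover
  obtain ⟨a, ha, b, hb, hab, hc⟩ : ∃ a ≤ S.card, ∃ b ≤ S.card, a < b ∧ c a = c b := by
    obtain ⟨a, ha, b, hb, hab, hc⟩ := Finset.exists_ne_map_eq_of_card_lt_of_maps_to
      (s := Finset.range (S.card + 1)) (by simp) fun t ht => hcS t (Finset.mem_range_succ_iff.1 ht)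
    rw [Finset.mem_range_succ_iff] at ha hb
    rcases hab.lt_or_gt with hlt | hgt
    · exact ⟨a, ha, b, hb, hlt, hc⟩
    · exact ⟨b, hb, a, ha, hgt, hc.symm⟩
  refine ⟨b - a, Nat.sub_ne_zero_of_lt hab, ?_⟩
  have hmem : (x ^ a)⁻¹ * x ^ b ∈ Γ := by
    have hquot : ((c a)⁻¹ * x ^ a)⁻¹ * ((c a)⁻¹ * x ^ b) ∈ Γ :=
      Γ.mul_mem (Γ.inv_mem (hcΓ a ha)) (hc ▸ hcΓ b hb)
    simpa [mul_assoc] using hquot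
  rwa [← Nat.add_sub_of_le hab.le, pow_add, inv_mul_cancel_left] at hmem

theorem index_le_card_of_leftCoset_cover {K : Subgroup G} {A : Set G} {S : Finset G}
    (hA : A * (K : Set G) = Set.univ) (hcover : A ⊆ ⋃ g ∈ S, g • (K : Set G)) :
    K.index ≤ S.card := by
  refine Subgroup.index_le_of_leftCoset_cover_const (g := id) (Set.univ_subset_iff.1 ?_)
  calc
    Set.univ = A * (K : Set G) := hA.symm
    _ ⊆ (⋃ g ∈ S, g • (K : Set G)) * (K : Set G) := Set.mul_subset_mul_right hcover
    _ = ⋃ g ∈ S, g • (K : Set G) := by simp only [Set.iUnion_mul, smul_mul_assoc, coe_mul_coe]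

theorem index_centralizer_le_card_of_nilpotent_leftCoset_cover {N : Subgroup G} [N.Normal]
    [IsMulTorsionFree N] [(Subgroup.centralizer (N : Set G)).FiniteIndex] {X A : Set G}
    (hXN : X ⊆ N) (hXA : ∀ x ∈ X, ∀ t < (Subgroup.centralizer X).index, x ^ t ∈ A)
    (hA : A * (Subgroup.centralizer X : Set G) = Set.univ) {Γ : Subgroup G}
    (hΓ : Group.IsNilpotent Γ) {S : Finset G} (hcover : A ⊆ ⋃ g ∈ S, g • (Γ : Set G)) :
    (Subgroup.centralizer X).index ≤ S.card := by
  by_contra! hlt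
  have hXΓ : ∀ x ∈ X, ∃ t ≠ 0, x ^ t ∈ Γ := fun x hx =>
    exists_pow_mem_of_leftCoset_cover fun t ht => hcover (hXA x hx t (ht.trans_lt hlt))
  have hΓX : Γ ≤ Subgroup.centralizer X :=
    le_centralizer_of_isNilpotent_of_exists_pow_mem hΓ hXN hXΓ
  refine hlt.not_ge (index_le_card_of_leftCoset_cover hA (hcover.trans ?_))
  exact Set.iUnion₂_mono fun g _ => Set.smul_set_mono hΓX

end Group

section SemidirectProduct

open SemidirectProduct

variable {N H : Type*} [Group H]

section Group

variable [Group N] {φ : H →* MulAut N}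

instance normal_range_inl : (inl : N →* N ⋊[φ] H).range.Normal := by
  rw [range_inl_eq_ker_rightHom]
  infer_instance

instance isMulTorsionFree_range_inl [IsMulTorsionFree N] :
    IsMulTorsionFree (inl : N →* N ⋊[φ] H).range :=
  let e := (MonoidHom.ofInjective (inl_injective (φ := φ))).symm
  e.injective.isMulTorsionFree e.toMonoidHom

theorem index_range_inl : (inl : N →* N ⋊[φ] H).range.index = Nat.card H := by
  rw [range_inl_eq_ker_rightHom, Subgroup.index_ker,
    MonoidHom.range_eq_top.2 rightHom_surjective, Subgroup.card_top]

theorem mul_range_inl_eq_univ {A : Set (N ⋊[φ] H)} (hA : ∀ h, ∃ g ∈ A, g.right = h) :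
    A * ((inl : N →* N ⋊[φ] H).range : Set (N ⋊[φ] H)) = Set.univ := by
  refine Set.eq_univ_of_forall fun g => ?_
  obtain ⟨a, ha, hag⟩ := hA g.right
  refine Set.mem_mul.2 ⟨a, ha, a⁻¹ * g, ?_, mul_inv_cancel_left a g⟩
  simp [range_inl_eq_ker_rightHom, MonoidHom.mem_ker, hag]

end Group

variable [CommGroup N] {φ : H →* MulAut N}

theorem commute_inl_iff {y : N} {g : N ⋊[φ] H} : Commute (inl y) g ↔ φ g.right y = y := by
  simp [Commute, SemiconjBy, SemidirectProduct.ext_iff, mul_comm y, eq_comm]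

theorem centralizer_inl_image {Y : Set N} (hY : ∀ h, (∀ y ∈ Y, φ h y = y) → h = 1) :
    Subgroup.centralizer (inl '' Y) = (inl : N →* N ⋊[φ] H).range := by
  ext g
  rw [range_inl_eq_ker_rightHom, MonoidHom.mem_ker, rightHom_eq_right,
    Subgroup.mem_centralizer_iff, Set.forall_mem_image]
  refine ⟨fun hg => hY _ fun y hy => commute_inl_iff.1 (hg hy), fun hg y _ => ?_⟩
  exact commute_inl_iff.2 (by simp [hg])

instance finiteIndex_centralizer_range_inl [Finite H] :
    (Subgroup.centralizer ((inl : N →* N ⋊[φ] H).range : Set (N ⋊[φ] H))).FiniteIndex := by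
  have hindex : (inl : N →* N ⋊[φ] H).range.FiniteIndex :=
    ⟨index_range_inl.trans_ne Nat.card_pos.ne'⟩
  exact Subgroup.finiteIndex_of_le (Subgroup.le_centralizer _)

theorem no_small_nilpotent_coset_cover_general [IsMulTorsionFree N] [Finite H] {Y : Set N}
    (hY : ∀ h, (∀ y ∈ Y, φ h y = y) → h = 1) {A : Set (N ⋊[φ] H)}
    (hYA : ∀ y ∈ Y, ∀ t < Nat.card H, inl (y ^ t) ∈ A) (hA : ∀ h, ∃ g ∈ A, g.right = h)
    {Γ : Subgroup (N ⋊[φ] H)} (hΓ : Group.IsNilpotent Γ) {S : Finset (N ⋊[φ] H)}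
    (hcover : A ⊆ ⋃ g ∈ S, g • (Γ : Set (N ⋊[φ] H))) : Nat.card H ≤ S.card := by
  have hcentralizer : Subgroup.centralizer (inl '' Y) = (inl : N →* N ⋊[φ] H).range :=
    centralizer_inl_image hY
  have hindex : (Subgroup.centralizer (inl '' Y : Set (N ⋊[φ] H))).index = Nat.card H :=
    hcentralizer ▸ index_range_inl
  rw [← hindex]
  refine index_centralizer_le_card_of_nilpotent_leftCoset_cover (N := inl.range)
    (Set.image_subset_range inl Y) ?_ ?_ hΓ hcover
  · rw [hindex, Set.forall_mem_image]
    simpa only [map_pow] using hYA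
  · rw [hcentralizer]
    exact mul_range_inl_eq_univ hA

end SemidirectProduct

section IntegerLattice

variable {n : ℕ}

/-- The `i`-th standard basis vector of `ℤⁿ`, written multiplicatively so that `permHom n` acts on
it and its multiples are powers. -/
def basisVector (i : Fin n) : Multiplicative (Fin n → ℤ) :=
  Multiplicative.ofAdd (Pi.single i 1)

/-- The set `[-r,r]ⁿ·S_n` in `ℤⁿ ⋊ S_n`, the pairs `(v, σ)` with `v` in the box. -/
def boxMulPerm (n : ℕ) (r : ℤ) :
    Set (Multiplicative (Fin n → ℤ) ⋊[permHom n] Equiv.Perm (Fin n)) :=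
  {g | ∀ i : Fin n, |Multiplicative.toAdd g.left i| ≤ r}

theorem basisVector_injective : Function.Injective (basisVector (n := n)) := fun i j h => by
  simpa [basisVector, Pi.single_apply] using congrFun (congrArg Multiplicative.toAdd h) i

theorem permHom_basisVector (σ : Equiv.Perm (Fin n)) (i : Fin n) :
    permHom n σ (basisVector i) = basisVector (σ i) :=
  congrArg Multiplicative.ofAdd (Pi.single_comp_equiv σ.symm i 1)

theorem eq_one_of_permHom_basisVector {σ : Equiv.Perm (Fin n)}
    (hσ : ∀ i, permHom n σ (basisVector i) = basisVector i) : σ = 1 :=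
  Equiv.ext fun i => basisVector_injective ((permHom_basisVector σ i).symm.trans (hσ i))

theorem inl_basisVector_pow_mem_boxMulPerm {r : ℤ} {t : ℕ} (ht : (t : ℤ) ≤ r) (i : Fin n) :
    SemidirectProduct.inl (basisVector i ^ t) ∈ boxMulPerm n r := by
  intro j
  rcases eq_or_ne j i with rfl | hj
  · simpa [basisVector, -map_pow] using ht
  · simpa [basisVector, hj, -map_pow] using (Nat.cast_nonneg t).trans ht

theorem inr_mem_boxMulPerm {r : ℤ} (hr : 0 ≤ r) (σ : Equiv.Perm (Fin n)) :
    SemidirectProduct.inr σ ∈ boxMulPerm n r := by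
  intro j
  simpa using hr

end IntegerLattice

/-- In `G = ℤⁿ ⋊ S_n`, the `2ⁿ`-approximate group `A = [-r,r]ⁿ·S_n` (with `r > n!`)
cannot be covered by fewer than `n!` cosets of any nilpotent subgroup. -/
theorem no_small_nilpotent_coset_cover
    (n : ℕ) (hn : 1 ≤ n) (r : ℤ) (hr : (Nat.factorial n : ℤ) < r)
    (Γ : Subgroup (Multiplicative (Fin n → ℤ) ⋊[permHom n] Equiv.Perm (Fin n)))
    (hnil : Group.IsNilpotent ↥Γ)
    (m : ℕ)
    (S : Finset (Multiplicative (Fin n → ℤ) ⋊[permHom n] Equiv.Perm (Fin n)))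
    (hcard : S.card = m)
    (hcover :
      {g : Multiplicative (Fin n → ℤ) ⋊[permHom n] Equiv.Perm (Fin n) |
          ∀ i : Fin n, |Multiplicative.toAdd g.left i| ≤ r} ⊆
        ⋃ g ∈ S, g • (Γ : Set (Multiplicative (Fin n → ℤ) ⋊[permHom n]
          Equiv.Perm (Fin n)))) :
    Nat.factorial n ≤ m := by
  have hcardPerm : Nat.card (Equiv.Perm (Fin n)) = n.factorial := by
    rw [Nat.card_perm, Nat.card_fin]
  rw [← hcard, ← hcardPerm]
  refine no_small_nilpotent_coset_cover_general (Y := Set.range basisVector)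
    (A := boxMulPerm n r) ?_ ?_ ?_ hnil hcover
  · exact fun σ hσ => eq_one_of_permHom_basisVector (Set.forall_mem_range.1 hσ)
  · exact Set.forall_mem_range.2 fun i t ht => inl_basisVector_pow_mem_boxMulPerm (by lia) i
  · exact fun σ => ⟨SemidirectProduct.inr σ, inr_mem_boxMulPerm (by lia) σ, rfl⟩
end
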